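/- arXiv:2502.13331 — 5 statements merged into one kernel-verified Lean document; each statement's English description precedes it below -/
import Mathlib

section
/- Let q be an odd prime power with q ≡ 1 (mod 4), let k be a divisor of q−1 with 3 < k < q−1, set e = (q−1)/k, and assume e is odd and k < p, where p is the characteristic of F_q. Then (q,k) gives a 3-design; more precisely, the PSL(2,q)-orbit of B is the block set of a 3-(q+1, k, λ) design with λ = (k−1)(k−2)/2. -/
/-!
Setting: `F` is a finite field of order `q`. The projective line `PG(1,q)` is
modelled as `Projectivization F (Fin 2 → F)`. Since scalar matrices act trivially
on the projective line, the images of a set under all elements of `SL(2,F)` form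
exactly its `PSL(2,F)`-orbit; `mapSL g` is the map of the projective line induced
by `g : SL(2,F)`. For `k ∣ q - 1`, the unique subgroup of order `k` of `Fˣ` is the
set of `k`-th roots of unity `{x : F | x ^ k = 1}`, embedded into the projective
line via `x ↦ [x : 1]`. `(q, k)` gives a 3-design iff there is `lam > 0` such that
every 3-subset of the projective line lies in exactly `lam` blocks of the orbit.
-/

noncomputable section

open Matrix

/-- The point at infinity `[1 : 0]` of the projective line over `F`. -/
def inftyPt (F : Type) [Field F] : Projectivization F (Fin 2 → F) :=
  Projectivization.mk F ![1, 0] (by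
    intro h
    simpa using congrFun h 0)

/-- The embedding of `F` into the projective line, `x ↦ [x : 1]`. -/
def embedPt (F : Type) [Field F] (x : F) : Projectivization F (Fin 2 → F) :=
  Projectivization.mk F ![x, 1] (by
    intro h
    simpa using congrFun h 1)

/-- The action of `g : SL(2,F)` on the projective line (as linear fractional
transformation). -/
def mapSL {F : Type} [Field F] (g : Matrix.SpecialLinearGroup (Fin 2) F) :
    Projectivization F (Fin 2 → F) → Projectivization F (Fin 2 → F) :=
  Projectivization.map (Matrix.SpecialLinearGroup.toLin' g : (Fin 2 → F) →ₗ[F] (Fin 2 → F))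
    (Matrix.SpecialLinearGroup.toLin' g).injective

/-- The starter block: the unique subgroup of order `k` of `Fˣ` (the `k`-th roots
of unity, for `k ∣ q - 1`), regarded as a subset of the projective line. -/
def starterB (F : Type) [Field F] (k : ℕ) : Set (Projectivization F (Fin 2 → F)) :=
  embedPt F '' {x : F | x ^ k = 1}

/-- The `PSL(2,F)`-orbit `GB` of the starter block. -/
def designBlocks (F : Type) [Field F] (k : ℕ) :
    Set (Set (Projectivization F (Fin 2 → F))) :=
  {S | ∃ g : Matrix.SpecialLinearGroup (Fin 2) F, S = mapSL g '' starterB F k}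

/-- `GB` is the block set of a `3-(q+1, k, lam)` design: `lam` is positive and every
3-subset of the projective line is contained in exactly `lam` blocks. -/
def isThreeDesign (F : Type) [Field F] (k lam : ℕ) : Prop :=
  0 < lam ∧
    ∀ T : Finset (Projectivization F (Fin 2 → F)), T.card = 3 →
      {S ∈ designBlocks F k | (T : Set (Projectivization F (Fin 2 → F))) ⊆ S}.ncard = lam

/-- `(q, k)` gives a 3-design. -/
def gives3Design (F : Type) [Field F] (k : ℕ) : Prop :=
  ∃ lam : ℕ, isThreeDesign F k lam

section helpers

variable {F : Type} [Field F]

/-- constructor for elements of `SL(2,F)` -/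
def mkSL (a b c d : F) (h : a * d - b * c = 1) : SpecialLinearGroup (Fin 2) F :=
  ⟨!![a, b; c, d], by rw [det_fin_two]; simpa using h⟩

@[simp] lemma mkSL_00 (a b c d : F) (h) : (mkSL a b c d h).1 0 0 = a := rfl
@[simp] lemma mkSL_01 (a b c d : F) (h) : (mkSL a b c d h).1 0 1 = b := rfl
@[simp] lemma mkSL_10 (a b c d : F) (h) : (mkSL a b c d h).1 1 0 = c := rfl
@[simp] lemma mkSL_11 (a b c d : F) (h) : (mkSL a b c d h).1 1 1 = d := rfl

lemma SL_ext {g h : SpecialLinearGroup (Fin 2) F} (h00 : g.1 0 0 = h.1 0 0)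
    (h01 : g.1 0 1 = h.1 0 1) (h10 : g.1 1 0 = h.1 1 0) (h11 : g.1 1 1 = h.1 1 1) : g = h := by
  apply Subtype.ext
  ext i j
  fin_cases i <;> fin_cases j <;> assumption

lemma mapSL_mk (g : SpecialLinearGroup (Fin 2) F) (v : Fin 2 → F) (hv : v ≠ 0) (hv' : g.1 *ᵥ v ≠ 0) :
    mapSL g (Projectivization.mk F v hv) = Projectivization.mk F (g.1 *ᵥ v) hv' := by
  unfold mapSL
  rw [Projectivization.map_mk]
  rfl

lemma mulVec_ne (g : SpecialLinearGroup (Fin 2) F) (v : Fin 2 → F) (hv : v ≠ 0) :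
    g.1 *ᵥ v ≠ 0 := by
  intro h
  apply hv
  have : (SpecialLinearGroup.toLin' g) v = 0 := h
  simpa using this

lemma mapSL_mul (g h : SpecialLinearGroup (Fin 2) F) (x) :
    mapSL (g * h) x = mapSL g (mapSL h x) := by
  induction x using Projectivization.ind with
  | h v hv =>
    rw [mapSL_mk h v hv (mulVec_ne h v hv), mapSL_mk g _ _ (mulVec_ne g _ (mulVec_ne h v hv)),
      mapSL_mk (g*h) v hv (mulVec_ne _ _ hv)]
    congr 1
    rw [mulVec_mulVec]
    rfl

lemma mapSL_one (x) : mapSL (1 : SpecialLinearGroup (Fin 2) F) x = x := by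
  induction x using Projectivization.ind with
  | h v hv =>
    rw [mapSL_mk 1 v hv (mulVec_ne _ v hv)]
    congr 1
    simp

lemma mapSL_inv_mul (g : SpecialLinearGroup (Fin 2) F) (x) : mapSL g⁻¹ (mapSL g x) = x := by
  rw [← mapSL_mul]; simp [mapSL_one]

lemma mapSL_mul_inv (g : SpecialLinearGroup (Fin 2) F) (x) : mapSL g (mapSL g⁻¹ x) = x := by
  rw [← mapSL_mul]; simp [mapSL_one]

lemma det_eq (g : SpecialLinearGroup (Fin 2) F) : g.1 0 0 * g.1 1 1 - g.1 0 1 * g.1 1 0 = 1 := by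
  have := g.2
  rwa [det_fin_two] at this

lemma embedPt_inj : Function.Injective (embedPt F) := by
  intro x y h
  unfold embedPt at h
  rw [Projectivization.mk_eq_mk_iff'] at h
  obtain ⟨a, ha⟩ := h
  have h0 := congrFun ha 0
  have h1 := congrFun ha 1
  simp at h0 h1
  simp [h1] at h0
  exact h0.symm

lemma mapSL_embed_iff (g : SpecialLinearGroup (Fin 2) F) (x y : F) :
    mapSL g (embedPt F x) = embedPt F y ↔
      g.1 0 0 * x + g.1 0 1 = y * (g.1 1 0 * x + g.1 1 1) := by
  unfold embedPt
  rw [mapSL_mk g _ _ (mulVec_ne g _ (by intro h; simpa using congrFun h 1)),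
    Projectivization.mk_eq_mk_iff']
  constructor
  · rintro ⟨a, ha⟩
    have h0 := congrFun ha 0
    have h1 := congrFun ha 1
    simp [mulVec, dotProduct, Fin.sum_univ_two] at h0 h1
    rw [← h0, ← h1]; ring
  · intro h
    refine ⟨g.1 1 0 * x + g.1 1 1, ?_⟩
    ext i
    fin_cases i
    · simp [mulVec, dotProduct, Fin.sum_univ_two]; rw [h]; ring
    · simp [mulVec, dotProduct, Fin.sum_univ_two]

lemma mapSL_infty_iff (g : SpecialLinearGroup (Fin 2) F) (y : F) :
    mapSL g (inftyPt F) = embedPt F y ↔ g.1 0 0 = y * g.1 1 0 := by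
  unfold embedPt inftyPt
  rw [mapSL_mk g _ _ (mulVec_ne g _ (by intro h; simpa using congrFun h 0)),
    Projectivization.mk_eq_mk_iff']
  constructor
  · rintro ⟨a, ha⟩
    have h0 := congrFun ha 0
    have h1 := congrFun ha 1
    simp [mulVec, dotProduct, Fin.sum_univ_two] at h0 h1
    rw [← h0, ← h1]; ring
  · intro h
    refine ⟨g.1 1 0, ?_⟩
    ext i
    fin_cases i
    · simp [mulVec, dotProduct, Fin.sum_univ_two]; rw [h]; ring
    · simp [mulVec, dotProduct, Fin.sum_univ_two]

lemma pt_cases (t : Projectivization F (Fin 2 → F)) : t = inftyPt F ∨ ∃ x, t = embedPt F x := by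
  induction t using Projectivization.ind with
  | h v hv =>
    by_cases h : v 1 = 0
    · left
      unfold inftyPt
      rw [Projectivization.mk_eq_mk_iff']
      refine ⟨v 0, ?_⟩
      ext i; fin_cases i <;> simp [h]
    · right
      refine ⟨v 0 / v 1, ?_⟩
      unfold embedPt
      rw [Projectivization.mk_eq_mk_iff']
      refine ⟨v 1, ?_⟩
      ext i; fin_cases i <;> simp
      field_simp

lemma exists_infty (t : Projectivization F (Fin 2 → F)) :
    ∃ g : SpecialLinearGroup (Fin 2) F, mapSL g (inftyPt F) = t := by
  rcases pt_cases t with rfl | ⟨x, rfl⟩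
  · exact ⟨1, mapSL_one _⟩
  · refine ⟨mkSL x (-1) 1 0 (by simp), ?_⟩
    rw [mapSL_infty_iff]; simp

lemma exists_P (t₁ t₂ : Projectivization F (Fin 2 → F)) (h : t₁ ≠ t₂) :
    ∃ g : SpecialLinearGroup (Fin 2) F, mapSL g (inftyPt F) = t₁ ∧ mapSL g (embedPt F 0) = t₂ := by
  obtain ⟨g, rfl⟩ := exists_infty t₁
  rcases pt_cases (mapSL g⁻¹ t₂) with h2 | ⟨x, h2⟩
  · exact absurd (by rw [← h2, mapSL_mul_inv]) h
  · refine ⟨g * mkSL 1 x 0 1 (by simp), ?_, ?_⟩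
    · rw [mapSL_mul]; congr 1
      unfold inftyPt
      rw [mapSL_mk _ _ _ (mulVec_ne _ _ (by intro h; simpa using congrFun h 0))]
      congr 1
      ext i; fin_cases i <;> simp [mulVec, dotProduct, Fin.sum_univ_two]
    · rw [mapSL_mul, ← mapSL_mul_inv g t₂, h2]; congr 1
      rw [mapSL_embed_iff]; simp

lemma mem_starterB {k : ℕ} {t} : t ∈ starterB F k ↔ ∃ x : F, x ^ k = 1 ∧ t = embedPt F x := by
  unfold starterB
  constructor
  · rintro ⟨x, hx, rfl⟩; exact ⟨x, hx, rfl⟩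
  · rintro ⟨x, hx, rfl⟩; exact ⟨x, hx, rfl⟩

/-- cardinality data on the roots of unity -/
lemma roots_data [Fintype F] (k : ℕ) (hk0 : 0 < k) (hk2 : Even k) (hkdvd : k ∣ Fintype.card F - 1)
    (he : Odd ((Fintype.card F - 1) / k)) :
    (∃ s : Finset F, s.card = k ∧ ∀ x, x ∈ s ↔ x ^ k = 1) ∧
    (∃ ζ : F, ζ ^ k = 1 ∧ ¬ IsSquare ζ) ∧
    (∀ r : F, (r ^ 2) ^ k = 1 → r ^ k = 1) := by
  classical
  obtain ⟨g, hg⟩ := IsCyclic.exists_generator (α := Fˣ)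
  have hog : orderOf g = Fintype.card F - 1 := by
    rw [orderOf_eq_card_of_forall_mem_zpowers hg, Nat.card_eq_fintype_card, Fintype.card_units]
  have hq1 : 0 < Fintype.card F - 1 := by
    have := Fintype.one_lt_card (α := F); omega
  obtain ⟨e, hke⟩ := hkdvd
  have hee : (Fintype.card F - 1) / k = e := by rw [hke]; exact Nat.mul_div_cancel_left _ hk0
  rw [hee] at he
  have hp : IsPrimitiveRoot g (Fintype.card F - 1) := by
    rw [← hog]; exact IsPrimitiveRoot.orderOf g
  have hz : IsPrimitiveRoot (g ^ e) k := hp.pow hq1 (by rw [hke]; ring)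
  have hz' : IsPrimitiveRoot ((g ^ e : Fˣ) : F) k := by
    exact IsPrimitiveRoot.coe_units_iff.mpr hz
  have key : ∀ r : F, (r ^ 2) ^ k = 1 → r ^ k = 1 := by
    intro r hr
    have hr0 : r ≠ 0 := by
      rintro rfl
      simp [hk0.ne'] at hr
    have h1 : r ^ (Fintype.card F - 1) = 1 := FiniteField.pow_card_sub_one_eq_one r hr0
    obtain ⟨m, rfl⟩ := he
    have h2 : r ^ (Fintype.card F - 1) = ((r ^ 2) ^ k) ^ m * r ^ k := by
      rw [hke]; ring
    rw [h1, hr] at h2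
    simpa using h2.symm
  refine ⟨⟨Polynomial.nthRootsFinset k 1, hz'.card_nthRootsFinset,
    fun x => Polynomial.mem_nthRootsFinset hk0 1⟩, ⟨((g ^ e : Fˣ) : F), hz'.pow_eq_one, ?_⟩, key⟩
  rintro ⟨r, hr⟩
  rw [hr] at hz'
  have h1 := key r (by rw [sq]; exact hz'.pow_eq_one)
  obtain ⟨m, rfl⟩ := hk2
  have h2 := hz'.dvd_of_pow_eq_one m (by rw [← sq, ← pow_mul]; rw [two_mul]; exact h1)
  have := Nat.le_of_dvd (by omega) h2
  omega

open Polynomial in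
lemma stab_aux (k : ℕ) (hk3 : 3 < k) (hkp : k < ringChar F) (s : Finset F) (hs : s.card = k)
    (a b c d : F) (hdet : a * d - b * c = 1)
    (hsk : ∀ x, x ∈ s ↔ x ^ k = 1)
    (H : ∀ x : F, x ^ k = 1 → (a * x + b) ^ k = (c * x + d) ^ k) :
    (b = 0 ∧ c = 0) ∨ (a = 0 ∧ d = 0) := by
  set co : ℕ → F := fun i => (a ^ i * b ^ (k - i) - c ^ i * d ^ (k - i)) * (k.choose i : F)
    + if i = 0 then a ^ k - c ^ k else 0 with hco
  set p : F[X] := ∑ i ∈ Finset.range k, C (co i) * X ^ i with hp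
  have hcoeff : ∀ i < k, p.coeff i = co i := by
    intro i hi
    simp [hp, coeff_X_pow, hi]
  have hdeg : p.natDegree < s.card := by
    rw [hs]
    have : p.natDegree ≤ k - 1 := by
      apply natDegree_sum_le_of_forall_le
      intro i hi
      have := Finset.mem_range.mp hi
      exact (natDegree_C_mul_X_pow_le _ _).trans (by omega)
    omega
  have hp0 : p = 0 := by
    apply eq_zero_of_natDegree_lt_card_of_eval_eq_zero' p s _ hdeg
    intro x hx
    have hx1 := (hsk x).1 hx
    have := H x hx1
    rw [add_pow, add_pow, Finset.sum_range_succ, Finset.sum_range_succ] at this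
    have h2 : eval x p = (∑ i ∈ Finset.range k, (a * x) ^ i * b ^ (k - i) * (k.choose i : F))
        - (∑ i ∈ Finset.range k, (c * x) ^ i * d ^ (k - i) * (k.choose i : F)) + (a ^ k - c ^ k) := by
      rw [hp, eval_finsetSum, ← Finset.sum_sub_distrib]
      have : (a ^ k - c ^ k) = ∑ i ∈ Finset.range k, if i = 0 then (a ^ k - c ^ k) * x ^ i else 0 := by
        rw [Finset.sum_ite_eq' (Finset.range k) 0]; simp; omega
      rw [this, ← Finset.sum_add_distrib]
      apply Finset.sum_congr rfl
      intro i _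
      simp only [hco, eval_mul, eval_C, eval_pow, eval_X]
      split_ifs <;> ring
    rw [h2]
    simp [mul_pow, hx1] at this ⊢
    linear_combination this
  have hcast : ∀ i ≤ k, (k.choose i : F) ≠ 0 := by
    intro i hi h
    rw [ringChar.spec] at h
    have hpp : (ringChar F).Prime := by
      rcases CharP.char_is_prime_or_zero F (ringChar F) with h | h
      · exact h
      · omega
    have h3 : (ringChar F) ∣ k.factorial := by
      rw [← Nat.choose_mul_factorial_mul_factorial hi, mul_assoc]
      exact h.mul_right _
    rw [hpp.dvd_factorial] at h3
    omega
  have hE : ∀ i, 0 < i → i < k → a ^ i * b ^ (k - i) = c ^ i * d ^ (k - i) := by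
    intro i hi hik
    have h := hcoeff i hik
    rw [hp0] at h
    simp only [coeff_zero, hco, if_neg hi.ne', add_zero] at h
    rcases mul_eq_zero.mp h.symm with h | h
    · exact sub_eq_zero.mp h
    · exact absurd h (hcast i hik.le)
  obtain ⟨m, rfl⟩ : ∃ m, k = m + 3 := ⟨k - 3, by omega⟩
  have e1 := hE 1 (by omega) (by omega)
  have e2 := hE 2 (by omega) (by omega)
  rw [show m + 3 - 1 = m + 2 by omega] at e1
  rw [show m + 3 - 2 = m + 1 by omega] at e2
  by_cases hab : a * b = 0
  · have hcd : c * d = 0 := by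
      have : c ^ 1 * d ^ (m + 2) = 0 := by
        rw [← e1]
        rcases mul_eq_zero.mp hab with h | h <;> simp [h]
      rcases mul_eq_zero.mp this with h | h
      · have : c = 0 := by simpa using h
        simp [this]
      · have := pow_eq_zero_iff (by omega) |>.mp h
        simp [this]
    rcases mul_eq_zero.mp hab with h | h <;> rcases mul_eq_zero.mp hcd with h' | h'
    · exfalso; rw [h, h'] at hdet; simp at hdet
    · exact Or.inr ⟨h, h'⟩
    · exact Or.inl ⟨h, h'⟩
    · exfalso; rw [h, h'] at hdet; simp at hdet
  · exfalso
    have ha : a ≠ 0 := left_ne_zero_of_mul hab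
    have hb : b ≠ 0 := right_ne_zero_of_mul hab
    have hne : a ^ 1 * b ^ (m + 2) ≠ 0 := mul_ne_zero (pow_ne_zero _ ha) (pow_ne_zero _ hb)
    have : a ^ 1 * b ^ (m + 2) * (a * d - b * c) = 0 := by
      linear_combination b * d * e2 - b * c * e1
    rw [hdet, mul_one] at this
    exact hne this

lemma mapSL_preserve {k : ℕ} (g : SpecialLinearGroup (Fin 2) F)
    (hg : ∀ x : F, x ^ k = 1 → mapSL g (embedPt F x) ∈ starterB F k) [Finite F] :
    mapSL g '' starterB F k = starterB F k := by
  have hinj : Function.Injective (mapSL g) := fun x y h => by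
    rw [← mapSL_inv_mul g x, h, mapSL_inv_mul]
  have hfin : (starterB F k).Finite := (Set.toFinite _).image _
  apply Set.eq_of_subset_of_ncard_le _ _ hfin
  · rintro _ ⟨t, ht, rfl⟩
    obtain ⟨x, hx, rfl⟩ := mem_starterB.1 ht
    exact hg x hx
  · rw [Set.ncard_image_of_injective _ hinj]

lemma stab_card [Finite F] (k : ℕ) (hk3 : 3 < k) (hk2 : Even k) (hkp : k < ringChar F)
    (s : Finset F) (hs : s.card = k) (hsk : ∀ x, x ∈ s ↔ x ^ k = 1)
    (hsq : ∀ r : F, (r ^ 2) ^ k = 1 → r ^ k = 1) :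
    Nat.card {h : SpecialLinearGroup (Fin 2) F // mapSL h '' starterB F k = starterB F k}
      = 2 * k := by
  have hU : Nat.card {x : F // x ^ k = 1} = k := by
    have : Nat.card {x : F // x ^ k = 1} = Nat.card s :=
      Nat.card_congr (Equiv.subtypeEquivRight fun x => by rw [hsk])
    rw [this, Nat.card_eq_fintype_card, Fintype.card_coe, hs]
  have hne : ∀ x : {x : F // x ^ k = 1}, x.1 ≠ 0 := by
    rintro ⟨x, hx⟩ h
    simp only at h
    rw [h, zero_pow (by omega)] at hx
    exact zero_ne_one hx
  let f : {x : F // x ^ k = 1} ⊕ {x : F // x ^ k = 1} →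
      {h : SpecialLinearGroup (Fin 2) F // mapSL h '' starterB F k = starterB F k} := fun u =>
    match u with
    | Sum.inl x => ⟨mkSL x.1 0 0 x.1⁻¹ (by simp [hne x]), mapSL_preserve _ (by
        intro y hy
        refine mem_starterB.2 ⟨x.1 ^ 2 * y, ?_, ?_⟩
        · rw [mul_pow, hy, ← pow_mul, mul_comm 2 k, pow_mul, x.2]; simp
        · rw [mapSL_embed_iff]; simp
          have := hne x
          field_simp)⟩
    | Sum.inr x => ⟨mkSL 0 x.1 (-x.1⁻¹) 0 (by simp [hne x]), mapSL_preserve _ (by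
        intro y hy
        have hy0 := hne ⟨y, hy⟩
        simp only at hy0
        refine mem_starterB.2 ⟨- (x.1 ^ 2 * y⁻¹), ?_, ?_⟩
        · rw [hk2.neg_pow, mul_pow, inv_pow, hy, ← pow_mul, mul_comm 2 k, pow_mul, x.2]; simp
        · rw [mapSL_embed_iff]; simp
          have := hne x
          field_simp)⟩
  have hf : Function.Bijective f := by
    constructor
    · rintro (x | x) (y | y) h
      · have : x.1 = y.1 := by
          have := congrArg (fun g => g.1.1 0 0) h
          simpa [f] using this
        rw [Subtype.ext this]
      · exfalso
        have := congrArg (fun g => g.1.1 0 0) h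
        simp only [f, mkSL_00] at this
        exact hne x this
      · exfalso
        have := congrArg (fun g => g.1.1 0 0) h
        simp only [f, mkSL_00] at this
        exact hne y this.symm
      · have : x.1 = y.1 := by
          have := congrArg (fun g => g.1.1 0 1) h
          simpa [f] using this
        rw [Subtype.ext this]
    · rintro ⟨g, hg⟩
      have hdet := det_eq g
      have H : ∀ x : F, x ^ k = 1 → ∃ y : F, y ^ k = 1 ∧
          g.1 0 0 * x + g.1 0 1 = y * (g.1 1 0 * x + g.1 1 1) := by
        intro x hx
        have : mapSL g (embedPt F x) ∈ starterB F k := by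
          rw [← hg]; exact ⟨_, mem_starterB.2 ⟨x, hx, rfl⟩, rfl⟩
        obtain ⟨y, hy, h⟩ := mem_starterB.1 this
        exact ⟨y, hy, (mapSL_embed_iff _ _ _).1 h⟩
      rcases stab_aux k hk3 hkp s hs _ _ _ _ hdet hsk (by
        intro x hx
        obtain ⟨y, hy, h⟩ := H x hx
        rw [h, mul_pow, hy, one_mul]) with ⟨hb, hc⟩ | ⟨ha, hd⟩
      · rw [hb, hc] at hdet
        have had : g.1 0 0 * g.1 1 1 = 1 := by simpa using hdet
        have ha0 : g.1 0 0 ≠ 0 := left_ne_zero_of_mul_eq_one had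
        have hd0 : g.1 1 1 = (g.1 0 0)⁻¹ := eq_inv_of_mul_eq_one_right had
        have : (g.1 0 0) ^ k = 1 := by
          apply hsq
          obtain ⟨y, hy, h⟩ := H 1 (one_pow _)
          have : (g.1 0 0) ^ 2 = y := by
            rw [hb, hc, hd0] at h
            simp at h
            field_simp at h
            exact h
          rw [this, hy]
        refine ⟨Sum.inl ⟨_, this⟩, Subtype.ext (SL_ext ?_ ?_ ?_ ?_)⟩ <;> simp [f, hb, hc, hd0]
      · rw [ha, hd] at hdet
        have had : g.1 0 1 * (- g.1 1 0) = 1 := by simpa using hdet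
        have ha0 : g.1 0 1 ≠ 0 := left_ne_zero_of_mul_eq_one had
        have hd0 : g.1 1 0 = - (g.1 0 1)⁻¹ := by
          rw [← eq_inv_of_mul_eq_one_right had, neg_neg]
        have : (g.1 0 1) ^ k = 1 := by
          apply hsq
          obtain ⟨y, hy, h⟩ := H 1 (one_pow _)
          have : (g.1 0 1) ^ 2 = -y := by
            rw [ha, hd, hd0] at h
            simp at h
            field_simp at h
            exact h
          rw [this, hk2.neg_pow, hy]
        refine ⟨Sum.inr ⟨_, this⟩, Subtype.ext (SL_ext ?_ ?_ ?_ ?_)⟩ <;> simp [f, ha, hd, hd0]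
  rw [← Nat.card_congr (Equiv.ofBijective f hf), Nat.card_sum, hU]
  ring

/-- the quantity whose square roots we count -/
def wval {k : ℕ} (γ : F) (e : Fin 3 ↪ {x : F // x ^ k = 1}) : F :=
  ((e 2).1 - (e 1).1) / (γ * ((e 0).1 - (e 2).1) * ((e 0).1 - (e 1).1))

lemma emb_ne {k : ℕ} (e : Fin 3 ↪ {x : F // x ^ k = 1}) {i j : Fin 3} (h : i ≠ j) :
    (e i).1 - (e j).1 ≠ 0 :=
  sub_ne_zero.2 fun h' => h (e.injective (Subtype.ext h'))

lemma wval_ne {k : ℕ} {γ : F} (hγ : γ ≠ 0) (e : Fin 3 ↪ {x : F // x ^ k = 1}) : wval γ e ≠ 0 :=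
  div_ne_zero (emb_ne e (by decide)) (mul_ne_zero (mul_ne_zero hγ (emb_ne e (by decide)))
    (emb_ne e (by decide)))

lemma sum_card [Fintype F] (k : ℕ) (hk3 : 3 < k) (hchar : ringChar F ≠ 2)
    (s : Finset F) (hs : s.card = k) (hsk : ∀ x, x ∈ s ↔ x ^ k = 1)
    (hz : ∃ ζ : F, ζ ^ k = 1 ∧ ¬ IsSquare ζ) (γ : F) (hγ : γ ≠ 0) :
    Nat.card (Σ e : Fin 3 ↪ {x : F // x ^ k = 1}, {l : F // l ^ 2 = wval γ e})
      = k * (k - 1) * (k - 2) := by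
  classical
  obtain ⟨ζ, hζ, hns⟩ := hz
  have hζ0 : ζ ≠ 0 := by rintro rfl; exact hns (by simp)
  have hU : Fintype.card {x : F // x ^ k = 1} = k := by
    have : Fintype.card {x : F // x ^ k = 1} = Fintype.card s :=
      Fintype.card_congr (Equiv.subtypeEquivRight fun x => by rw [hsk])
    rw [this, Fintype.card_coe, hs]
  have hcard : ∀ e : Fin 3 ↪ {x : F // x ^ k = 1},
      (Nat.card {l : F // l ^ 2 = wval γ e} : ℤ) = quadraticChar F (wval γ e) + 1 := by
    intro e
    rw [← quadraticChar_card_sqrts hchar, Nat.card_eq_fintype_card, Set.toFinset_card]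
    rfl
  have hχ : quadraticChar F ζ⁻¹ = -1 := by
    have := (quadraticChar_neg_one_iff_not_isSquare (F := F) (a := ζ⁻¹)).2 (by simpa using hns)
    exact this
  let m : {x : F // x ^ k = 1} ≃ {x : F // x ^ k = 1} :=
    { toFun := fun x => ⟨ζ * x.1, by rw [mul_pow, hζ, x.2, one_mul]⟩
      invFun := fun x => ⟨ζ⁻¹ * x.1, by rw [mul_pow, inv_pow, hζ, x.2, inv_one, one_mul]⟩
      left_inv := fun x => by simp [hζ0]
      right_inv := fun x => by simp [hζ0] }
  let M : (Fin 3 ↪ {x : F // x ^ k = 1}) ≃ (Fin 3 ↪ {x : F // x ^ k = 1}) :=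
    Equiv.embeddingCongr (Equiv.refl _) m
  have hM : ∀ e, wval γ (M e) = ζ⁻¹ * wval γ e := by
    intro e
    have h1 := emb_ne e (show (0 : Fin 3) ≠ 2 by decide)
    have h2 := emb_ne e (show (0 : Fin 3) ≠ 1 by decide)
    have : ∀ i, (M e i).1 = ζ * (e i).1 := fun i => rfl
    unfold wval
    rw [this, this, this, ← mul_sub, ← mul_sub, ← mul_sub]
    field_simp
  have hsum : ∑ e : Fin 3 ↪ {x : F // x ^ k = 1}, quadraticChar F (wval γ e) = 0 := by
    have h := Equiv.sum_comp M (fun e => quadraticChar F (wval γ e))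
    simp only [hM, map_mul, hχ, neg_one_mul, Finset.sum_neg_distrib] at h
    omega
  have : (Nat.card (Σ e : Fin 3 ↪ {x : F // x ^ k = 1}, {l : F // l ^ 2 = wval γ e}) : ℤ)
      = (k * (k - 1) * (k - 2) : ℕ) := by
    rw [Nat.card_sigma, Nat.cast_sum, Finset.sum_congr rfl (fun e _ => hcard e),
      Finset.sum_add_distrib, hsum, Finset.sum_const, Finset.card_univ,
      Fintype.card_embedding_eq, hU]
    simp [Nat.descFactorial]
    ring
  exact_mod_cast this

lemma N_card [Fintype F] (k : ℕ) (hk3 : 3 < k) (hchar : ringChar F ≠ 2)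
    (s : Finset F) (hs : s.card = k) (hsk : ∀ x, x ∈ s ↔ x ^ k = 1)
    (hz : ∃ ζ : F, ζ ^ k = 1 ∧ ¬ IsSquare ζ) (γ : F) (hγ : γ ≠ 0) :
    Nat.card {h : SpecialLinearGroup (Fin 2) F // mapSL h (inftyPt F) ∈ starterB F k ∧
      mapSL h (embedPt F 0) ∈ starterB F k ∧ mapSL h (embedPt F γ) ∈ starterB F k}
      = k * (k - 1) * (k - 2) := by
  rw [← sum_card k hk3 hchar s hs hsk hz γ hγ]
  symm
  have hl0 : ∀ (e : Fin 3 ↪ {x : F // x ^ k = 1}) (l : F), l ^ 2 = wval γ e → l ≠ 0 := by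
    rintro e l hl rfl
    exact wval_ne hγ e (by rw [← hl]; simp)
  let f : (Σ e : Fin 3 ↪ {x : F // x ^ k = 1}, {l : F // l ^ 2 = wval γ e}) →
    {h : SpecialLinearGroup (Fin 2) F // mapSL h (inftyPt F) ∈ starterB F k ∧
      mapSL h (embedPt F 0) ∈ starterB F k ∧ mapSL h (embedPt F γ) ∈ starterB F k} := fun p =>
    ⟨mkSL ((p.1 0).1 * p.2.1) ((p.1 1).1 * (p.2.1 * ((p.1 0).1 - (p.1 1).1))⁻¹) p.2.1
      (p.2.1 * ((p.1 0).1 - (p.1 1).1))⁻¹ (by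
        have h1 := emb_ne p.1 (show (0 : Fin 3) ≠ 1 by decide)
        have h2 := hl0 p.1 p.2.1 p.2.2
        field_simp), by
        refine ⟨mem_starterB.2 ⟨_, (p.1 0).2, ?_⟩, mem_starterB.2 ⟨_, (p.1 1).2, ?_⟩,
          mem_starterB.2 ⟨_, (p.1 2).2, ?_⟩⟩
        · rw [mapSL_infty_iff]; simp
        · rw [mapSL_embed_iff]; simp
        · rw [mapSL_embed_iff]; simp only [mkSL_00, mkSL_01, mkSL_10, mkSL_11]
          have h1 := emb_ne p.1 (show (0 : Fin 3) ≠ 1 by decide)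
          have h3 := emb_ne p.1 (show (0 : Fin 3) ≠ 2 by decide)
          have h2 := hl0 p.1 p.2.1 p.2.2
          have h := p.2.2
          unfold wval at h
          rw [eq_div_iff (mul_ne_zero (mul_ne_zero hγ h3) h1)] at h
          field_simp
          linear_combination h⟩
  apply Nat.card_congr (Equiv.ofBijective f _)
  have hval : ∀ p, mapSL (f p).1 (inftyPt F) = embedPt F (p.1 0).1 ∧
      mapSL (f p).1 (embedPt F 0) = embedPt F (p.1 1).1 ∧
      mapSL (f p).1 (embedPt F γ) = embedPt F (p.1 2).1 ∧ (f p).1.1 1 0 = p.2.1 := by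
    intro p
    refine ⟨?_, ?_, ?_, rfl⟩
    · rw [mapSL_infty_iff]; simp [f]
    · rw [mapSL_embed_iff]; simp [f]
    · rw [mapSL_embed_iff]; simp only [f, mkSL_00, mkSL_01, mkSL_10, mkSL_11]
      have h1 := emb_ne p.1 (show (0 : Fin 3) ≠ 1 by decide)
      have h3 := emb_ne p.1 (show (0 : Fin 3) ≠ 2 by decide)
      have h2 := hl0 p.1 p.2.1 p.2.2
      have h := p.2.2
      unfold wval at h
      rw [eq_div_iff (mul_ne_zero (mul_ne_zero hγ h3) h1)] at h
      field_simp [f]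
      linear_combination h
  constructor
  · rintro p p' h
    obtain ⟨a1, a2, a3, a4⟩ := hval p
    obtain ⟨b1, b2, b3, b4⟩ := hval p'
    rw [h] at a1 a2 a3 a4
    have c1 := embedPt_inj (a1.symm.trans b1)
    have c2 := embedPt_inj (a2.symm.trans b2)
    have c3 := embedPt_inj (a3.symm.trans b3)
    have c4 := a4.symm.trans b4
    obtain ⟨e, l, hl⟩ := p
    obtain ⟨e', l', hl'⟩ := p'
    have : e = e' := by
      ext i
      fin_cases i
      · exact c1
      · exact c2
      · exact c3
    subst this
    simp only at c4
    subst c4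
    rfl
  · rintro ⟨g, hg1, hg2, hg3⟩
    obtain ⟨x, hx, h1⟩ := mem_starterB.1 hg1
    obtain ⟨y, hy, h2⟩ := mem_starterB.1 hg2
    obtain ⟨z, hz, h3⟩ := mem_starterB.1 hg3
    rw [mapSL_infty_iff] at h1
    rw [mapSL_embed_iff] at h2 h3
    have hdet := det_eq g
    simp only [mul_zero, zero_add] at h2
    rw [h1, h2] at h3 hdet
    set c := g.1 1 0
    set d := g.1 1 1
    have hcd : c * d * (x - y) = 1 := by linear_combination hdet
    have hc : c ≠ 0 := by rintro h; simp [h] at hcd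
    have hd : d ≠ 0 := by rintro h; simp [h] at hcd
    have hxy : x - y ≠ 0 := by rintro h; simp [h] at hcd
    have hxz : x - z ≠ 0 := by
      intro h
      have : d * (x - y) = 0 := by linear_combination (d + c * γ) * h - h3
      exact (mul_ne_zero hd hxy) this
    have hyz : z - y ≠ 0 := by
      intro h
      have : c * γ * (x - y) = 0 := by linear_combination (d + c * γ) * h + h3
      exact (mul_ne_zero (mul_ne_zero hc hγ) hxy) this
    let e0 : Fin 3 → {x : F // x ^ k = 1} := ![⟨x, hx⟩, ⟨y, hy⟩, ⟨z, hz⟩]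
    have he0 : Function.Injective e0 := by
      intro i j hij
      have hij := congrArg Subtype.val hij
      rw [sub_ne_zero] at hxy hxz hyz
      fin_cases i <;> fin_cases j <;> first
        | rfl
        | exact absurd hij hxy
        | exact absurd hij.symm hxy
        | exact absurd hij hxz
        | exact absurd hij.symm hxz
        | exact absurd hij hyz
        | exact absurd hij.symm hyz
    have hdinv : (c * (x - y))⁻¹ = d := inv_eq_of_mul_eq_one_right (by linear_combination hcd)
    refine ⟨⟨⟨e0, he0⟩, c, ?_⟩, Subtype.ext (SL_ext ?_ ?_ ?_ ?_)⟩
    · simp [wval, e0]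
      rw [eq_div_iff (mul_ne_zero (mul_ne_zero hγ hxz) hxy)]
      linear_combination c * (x - y) * h3 + (z - y) * hcd
    · exact h1.symm
    · refine Eq.trans ?_ h2.symm
      exact congrArg (y * ·) hdinv
    · rfl
    · exact hdinv

lemma N_card' [Fintype F] (k : ℕ) (hk3 : 3 < k) (hchar : ringChar F ≠ 2)
    (s : Finset F) (hs : s.card = k) (hsk : ∀ x, x ∈ s ↔ x ^ k = 1)
    (hz : ∃ ζ : F, ζ ^ k = 1 ∧ ¬ IsSquare ζ)
    (T : Finset (Projectivization F (Fin 2 → F))) (hT : T.card = 3) :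
    Nat.card {g : SpecialLinearGroup (Fin 2) F //
      (T : Set (Projectivization F (Fin 2 → F))) ⊆ mapSL g '' starterB F k}
      = k * (k - 1) * (k - 2) := by
  classical
  obtain ⟨t₁, t₂, t₃, h12, h13, h23, rfl⟩ := Finset.card_eq_three.1 hT
  obtain ⟨P, rfl, rfl⟩ := exists_P t₁ t₂ h12
  obtain ⟨γ, hγ⟩ : ∃ γ, t₃ = mapSL P (embedPt F γ) := by
    rcases pt_cases (mapSL P⁻¹ t₃) with h | ⟨γ, h⟩
    · exact absurd (by rw [← h, mapSL_mul_inv]) h13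
    · exact ⟨γ, by rw [← h, mapSL_mul_inv]⟩
  subst hγ
  have hγ0 : γ ≠ 0 := by rintro rfl; exact h23 rfl
  rw [← N_card k hk3 hchar s hs hsk hz γ hγ0]
  have key : ∀ (g : SpecialLinearGroup (Fin 2) F) (t),
      mapSL P t ∈ mapSL g '' starterB F k ↔ mapSL (g⁻¹ * P) t ∈ starterB F k := by
    intro g t
    rw [mapSL_mul]
    constructor
    · rintro ⟨u, hu, h⟩
      rw [← h, mapSL_inv_mul]; exact hu
    · intro h
      exact ⟨_, h, mapSL_mul_inv _ _⟩
  refine Nat.card_congr (Equiv.subtypeEquiv ((Equiv.inv _).trans (Equiv.mulRight P)) ?_)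
  intro g
  simp only [Finset.coe_insert, Finset.coe_singleton, Set.insert_subset_iff,
    Set.singleton_subset_iff, key]
  rfl

lemma blocks_card [Finite F] (k n : ℕ) (T : Set (Projectivization F (Fin 2 → F)))
    (hst : Nat.card {h : SpecialLinearGroup (Fin 2) F // mapSL h '' starterB F k = starterB F k}
      = n) :
    Nat.card {g : SpecialLinearGroup (Fin 2) F // T ⊆ mapSL g '' starterB F k} =
      {S ∈ designBlocks F k | T ⊆ S}.ncard * n := by
  classical
  have : Finite (Projectivization F (Fin 2 → F)) := by
    unfold Projectivization; infer_instance
  let φ : {g : SpecialLinearGroup (Fin 2) F // T ⊆ mapSL g '' starterB F k} →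
      {S | S ∈ designBlocks F k ∧ T ⊆ S} := fun g => ⟨mapSL g.1 '' starterB F k, ⟨g.1, rfl⟩, g.2⟩
  have := Fintype.ofFinite {S | S ∈ designBlocks F k ∧ T ⊆ S}
  rw [← Nat.card_congr (Equiv.sigmaFiberEquiv φ), Nat.card_sigma, Finset.sum_const_nat (m := n),
    Finset.card_univ, ← Nat.card_eq_fintype_card]
  · rfl
  · rintro ⟨S, ⟨g₀, hS⟩, hTS⟩ -
    rw [← hst]
    have hc : ∀ g : SpecialLinearGroup (Fin 2) F, mapSL g '' starterB F k = S ↔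
        mapSL (g₀⁻¹ * g) '' starterB F k = starterB F k := by
      intro g
      have h1 : mapSL (g₀⁻¹ * g) '' starterB F k = mapSL g₀⁻¹ '' (mapSL g '' starterB F k) := by
        rw [Set.image_image]; simp only [mapSL_mul]
      rw [h1, hS]
      constructor
      · intro h
        rw [h, Set.image_image]; simp [mapSL_inv_mul]
      · intro h
        conv_rhs => rw [← h]
        rw [Set.image_image]; simp [mapSL_mul_inv]
    refine Nat.card_congr
      { toFun := fun x => ⟨g₀⁻¹ * x.1.1, (hc _).1 (congrArg Subtype.val x.2)⟩
        invFun := fun y => ⟨⟨g₀ * y.1, ?_⟩, ?_⟩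
        left_inv := ?_
        right_inv := ?_ }
    · rw [(hc (g₀ * y.1)).2 (by rw [inv_mul_cancel_left]; exact y.2)]; exact hTS
    · exact Subtype.ext ((hc (g₀ * y.1)).2 (by rw [inv_mul_cancel_left]; exact y.2))
    · intro x
      apply Subtype.ext; apply Subtype.ext
      simp
    · intro y
      apply Subtype.ext
      simp

end helpers

/-- Theorem 2.5(i): if `e = (q-1)/k` is odd and `k` is less than the characteristic,
then `(q,k)` gives a `3-(q+1, k, (k-1)(k-2)/2)` design. -/
theorem stmt_0 (F : Type) [Field F] [Fintype F] [DecidableEq F]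
    (q k : ℕ) (hq : Fintype.card F = q) (hqodd : Odd q) (hq4 : q % 4 = 1)
    (hkdvd : k ∣ q - 1) (hk3 : 3 < k) (hkq : k < q - 1)
    (he : Odd ((q - 1) / k)) (hkp : k < ringChar F) :
    isThreeDesign F k ((k - 1) * (k - 2) / 2) := by
  subst hq
  have hk2 : Even k := by
    have h1 : k * ((Fintype.card F - 1) / k) = Fintype.card F - 1 := Nat.mul_div_cancel' hkdvd
    have h2 : Even (k * ((Fintype.card F - 1) / k)) := by
      rw [h1, Nat.even_iff]; omega
    rcases Nat.even_mul.1 h2 with h | h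
    · exact h
    · exact absurd h (Nat.not_even_iff_odd.2 he)
  have hchar : ringChar F ≠ 2 := by omega
  obtain ⟨⟨s, hs, hsk⟩, hz, hsq⟩ := roots_data (F := F) k (by omega) hk2 hkdvd he
  have hst := stab_card k hk3 hk2 hkp s hs hsk hsq
  constructor
  · obtain ⟨m, rfl⟩ : ∃ m, k = m + 4 := ⟨k - 4, by omega⟩
    apply Nat.div_pos _ (by norm_num)
    rw [show m + 4 - 1 = m + 3 by omega, show m + 4 - 2 = m + 2 by omega]
    nlinarith
  · intro T hT
    have h1 := N_card' k hk3 hchar s hs hsk hz T hT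
    rw [blocks_card k (2 * k) T hst] at h1
    symm
    apply Nat.div_eq_of_eq_mul_left (by norm_num)
    apply Nat.eq_of_mul_eq_mul_left (show 0 < k by omega)
    rw [← mul_assoc, ← h1]
    ring
end
end

section
/- Let q be an odd prime power with q ≡ 1 (mod 4), let k be a divisor of q−1 with 3 < k < q−1, set e = (q−1)/k, and assume e is even and k < p, where p is the characteristic of F_q. If (q,k) gives a 3-design, i.e., the PSL(2,q)-orbit of B is the block set of a 3-(q+1, k, λ) design for some positive integer λ, then λ = (k−1)(k−2)/4. -/
/-!
Setting: `F` is a finite field of order `q`. The projective line `PG(1,q)` is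
modelled as `Projectivization F (Fin 2 → F)`. Since scalar matrices act trivially
on the projective line, the images of a set under all elements of `SL(2,F)` form
exactly its `PSL(2,F)`-orbit; `mapSL g` is the map of the projective line induced
by `g : SL(2,F)`. For `k ∣ q - 1`, the unique subgroup of order `k` of `Fˣ` is the
set of `k`-th roots of unity `{x : F | x ^ k = 1}`, embedded into the projective
line via `x ↦ [x : 1]`. `(q, k)` gives a 3-design iff there is `lam > 0` such that
every 3-subset of the projective line lies in exactly `lam` blocks of the orbit.
-/

noncomputable section

open Matrix

open scoped Pointwise

theorem aux_embed_inj (F : Type) [Field F] : Function.Injective (embedPt F) := by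
  intro x y h
  unfold embedPt at h
  rw [Projectivization.mk_eq_mk_iff'] at h
  obtain ⟨a, ha⟩ := h
  have h0 := congrFun ha 0
  have h1 := congrFun ha 1
  simp at h0 h1
  rw [← h0, h1, one_mul]

theorem aux_map_embed {F : Type} [Field F] (g : Matrix.SpecialLinearGroup (Fin 2) F) (x y : F) :
    mapSL g (embedPt F x) = embedPt F y ↔ g.1 0 0 * x + g.1 0 1 = y * (g.1 1 0 * x + g.1 1 1) := by
  unfold mapSL embedPt
  rw [Projectivization.map_mk, Projectivization.mk_eq_mk_iff']
  have hv : ((Matrix.SpecialLinearGroup.toLin' g : (Fin 2 → F) →ₗ[F] (Fin 2 → F)) ![x, 1])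
      = ![g.1 0 0 * x + g.1 0 1, g.1 1 0 * x + g.1 1 1] := by
    ext i
    fin_cases i <;> simp [Matrix.SpecialLinearGroup.toLin'_apply, Matrix.mulVec, dotProduct, Fin.sum_univ_two]
  rw [hv]
  constructor
  · rintro ⟨a, ha⟩
    have h0 := congrFun ha 0
    have h1 := congrFun ha 1
    simp at h0 h1
    rw [← h0, ← h1, mul_comm]
  · intro h
    refine ⟨g.1 1 0 * x + g.1 1 1, ?_⟩
    ext i
    fin_cases i
    · simp [h]; ring
    · simp

theorem aux_roots (F : Type) [Field F] [Fintype F] (n : ℕ) (hn : 0 < n)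
    (h : n ∣ Fintype.card F - 1) : {x : F | x ^ n = 1}.ncard = n := by
  classical
  obtain ⟨g, hg⟩ := IsCyclic.exists_ofOrder_eq_natCard (α := Fˣ)
  rw [Nat.card_eq_fintype_card, Fintype.card_units] at hg
  obtain ⟨m, hm⟩ := h
  have hpos : 0 < Fintype.card F - 1 := by
    have := Fintype.one_lt_card (α := F); omega
  have h1 : IsPrimitiveRoot g (Fintype.card F - 1) := hg ▸ IsPrimitiveRoot.orderOf g
  have h2 : IsPrimitiveRoot (g ^ m) n := h1.pow hpos (by rw [hm, mul_comm])
  have h3 : IsPrimitiveRoot ((g ^ m : Fˣ) : F) n := IsPrimitiveRoot.coe_units_iff.mpr h2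
  have h4 := h3.card_nthRootsFinset
  refine Eq.trans ?_ h4
  rw [← Set.ncard_coe_finset]
  congr 1
  ext x
  simp [Polynomial.mem_nthRootsFinset hn]

theorem aux_poly {F : Type} [Field F] [Fintype F] (k : ℕ) (hk3 : 3 < k) (hkp : k < ringChar F)
    (hcard : {x : F | x ^ k = 1}.ncard = k) (a b c d : F) (hdet : a * d - b * c = 1)
    (h : ∀ x : F, x ^ k = 1 → (a * x + b) ^ k = (c * x + d) ^ k) :
    (b = 0 ∧ c = 0) ∨ (a = 0 ∧ d = 0) := by
  classical
  open Polynomial in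
  have hP : ∃ μ : F, (C a * X + C b) ^ k - (C c * X + C d) ^ k = C μ * (X ^ k - 1) := by
    set f : F[X] := (C a * X + C b) ^ k - (C c * X + C d) ^ k with hf
    refine ⟨f.coeff k, ?_⟩
    have hlin : ∀ u v : F, ((C u * X + C v) ^ k).natDegree ≤ k := by
      intro u v
      refine natDegree_pow_le.trans ?_
      have := natDegree_linear_le (a := u) (b := v)
      nlinarith
    have hfd : f.natDegree ≤ k := natDegree_sub_le_of_le (hlin a b) (hlin c d)|>.trans (by simp)
    have hgd : (X ^ k - 1 : F[X]).natDegree ≤ k := by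
      have := natDegree_X_pow_sub_C (n := k) (r := (1 : F))
      simp at this; exact this.le
    refine Polynomial.eq_of_degree_sub_lt_of_eval_finset_eq (Set.toFinset {x : F | x ^ k = 1}) ?_ ?_
    · rw [← Set.ncard_eq_toFinset_card', hcard, Polynomial.degree_lt_iff_coeff_zero]
      intro m hm
      rcases hm.eq_or_lt with rfl | hm
      · have : (1 : F[X]).coeff k = 0 := by rw [coeff_one]; simp; omega
        simp [this]
      · rw [coeff_sub, coeff_C_mul, coeff_eq_zero_of_natDegree_lt (hfd.trans_lt hm),
          coeff_eq_zero_of_natDegree_lt (hgd.trans_lt hm)]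
        simp
    · intro x hx
      simp at hx
      simp [hf, hx, h x hx]
  obtain ⟨μ, hμ⟩ := hP
  have hk0 : (k : F) ≠ 0 := by
    intro h0
    have := (ringChar.spec F k).1 h0
    exact absurd (Nat.le_of_dvd (by omega) this) (by omega)
  have hk1 : ((k - 1 : ℕ) : F) ≠ 0 := by
    intro h0
    have := (ringChar.spec F _).1 h0
    exact absurd (Nat.le_of_dvd (by omega) this) (by omega)
  have d1 := congrArg Polynomial.derivative hμ
  have d2 := congrArg Polynomial.derivative d1
  have e1 := congrArg (Polynomial.eval 0) d1
  have e2 := congrArg (Polynomial.eval 0) d2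
  simp [Polynomial.derivative_pow, show k - 1 ≠ 0 by omega] at e1
  simp [Polynomial.derivative_pow, show k - 1 - 1 ≠ 0 by omega, show k - 1 ≠ 0 by omega] at e2
  obtain ⟨m, rfl⟩ : ∃ m, k = m + 3 := ⟨k - 3, by omega⟩
  simp only [Nat.add_sub_cancel, show m + 3 - 1 = m + 2 by omega, show m + 2 - 1 = m + 1 by omega] at e1 e2 hk1
  have f1 : a * b ^ (m + 2) = c * d ^ (m + 2) := by
    apply mul_left_cancel₀ hk0
    linear_combination e1
  have f2 : a ^ 2 * b ^ (m + 1) = c ^ 2 * d ^ (m + 1) := by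
    apply mul_left_cancel₀ hk0
    apply mul_left_cancel₀ hk1
    linear_combination e2
  by_cases ha : a = 0
  · right
    refine ⟨ha, ?_⟩
    subst ha
    have hc : c ≠ 0 := by rintro rfl; simp at hdet
    simpa [hc] using f1
  by_cases hb : b = 0
  · left
    refine ⟨hb, ?_⟩
    subst hb
    have hd : d ≠ 0 := by rintro rfl; simp at hdet
    simpa [hd] using f1
  exfalso
  have hd : d ≠ 0 := by
    rintro rfl
    simp [ha, hb] at f1
  have hc : c ≠ 0 := by
    rintro rfl
    simp [ha, hb] at f1
  have key : (a * b ^ (m + 2)) * (c ^ 2 * d ^ (m + 1)) = (c * d ^ (m + 2)) * (a ^ 2 * b ^ (m + 1)) := by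
    rw [f1, f2]
  have hne : a * b ^ (m + 1) * c * d ^ (m + 1) ≠ 0 := by positivity
  have : (a * b ^ (m + 1) * c * d ^ (m + 1)) * (a * d - b * c) = 0 := by
    linear_combination -key
  rw [hdet, mul_one] at this
  exact hne this

theorem aux_starter_ncard (F : Type) [Field F] [Fintype F] (k : ℕ)
    (hcard : {x : F | x ^ k = 1}.ncard = k) : (starterB F k).ncard = k := by
  rw [starterB, Set.ncard_image_of_injective _ (aux_embed_inj F), hcard]

theorem aux_smul {F : Type} [Field F] (g : Matrix.SpecialLinearGroup (Fin 2) F)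
    (S : Set (Projectivization F (Fin 2 → F))) : g • S = mapSL g '' S := by
  rfl

theorem aux_stab_iff {F : Type} [Field F] [Fintype F] (k : ℕ)
    (g : Matrix.SpecialLinearGroup (Fin 2) F) :
    g ∈ MulAction.stabilizer (Matrix.SpecialLinearGroup (Fin 2) F) (starterB F k) ↔
      ∀ x : F, x ^ k = 1 → ∃ y : F, y ^ k = 1 ∧
        g.1 0 0 * x + g.1 0 1 = y * (g.1 1 0 * x + g.1 1 1) := by
  rw [MulAction.mem_stabilizer_iff]
  have h1 : g • starterB F k = starterB F k ↔ g • starterB F k ⊆ starterB F k := by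
    refine ⟨fun h => h.subset, fun h => ?_⟩
    refine Set.eq_of_subset_of_ncard_le h ?_ (Set.toFinite _)
    rw [Set.ncard_smul_set]
  rw [h1, aux_smul]
  constructor
  · intro h x hx
    obtain ⟨y, hy, hxy⟩ := h ⟨_, ⟨x, hx, rfl⟩, rfl⟩
    exact ⟨y, hy, (aux_map_embed g x y).1 hxy.symm⟩
  · rintro h _ ⟨_, ⟨x, hx, rfl⟩, rfl⟩
    obtain ⟨y, hy, hxy⟩ := h x hx
    exact ⟨y, hy, ((aux_map_embed g x y).2 hxy).symm⟩

theorem aux_stab_card (F : Type) [Field F] [Fintype F] (k : ℕ)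
    (hk3 : 3 < k) (hkp : k < ringChar F) (h2k : 2 * k ∣ Fintype.card F - 1) (i : F)
    (hi : i * i = -1) :
    Nat.card (MulAction.stabilizer (Matrix.SpecialLinearGroup (Fin 2) F) (starterB F k)) = 4 * k := by
  have hcard := aux_roots F k (by omega) ((Dvd.intro_left 2 rfl).trans h2k)
  have hcard2 := aux_roots F (2 * k) (by omega) h2k
  have hi0 : i ≠ 0 := by rintro rfl; simp at hi
  have hU : ∀ u : {x : F | x ^ (2 * k) = 1}, (u : F) ≠ 0 := by
    rintro ⟨u, hu⟩ rfl
    rw [Set.mem_ofPred_eq, zero_pow (by omega)] at hu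
    exact zero_ne_one hu
  let D : {x : F | x ^ (2 * k) = 1} → Matrix.SpecialLinearGroup (Fin 2) F := fun u =>
    ⟨!![(u : F), 0; 0, (u : F)⁻¹], by simp [Matrix.det_fin_two, hU u]⟩
  let E : {x : F | x ^ (2 * k) = 1} → Matrix.SpecialLinearGroup (Fin 2) F := fun u =>
    ⟨!![0, i * (u : F); i * (u : F)⁻¹, 0], by
      have := hU u
      simp [Matrix.det_fin_two]; field_simp; linear_combination -hi⟩
  let f : {x : F | x ^ (2 * k) = 1} ⊕ {x : F | x ^ (2 * k) = 1} →
      MulAction.stabilizer (Matrix.SpecialLinearGroup (Fin 2) F) (starterB F k) :=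
    Sum.elim (fun u => ⟨D u, by
        rw [aux_stab_iff]
        intro x hx
        refine ⟨(u : F) ^ 2 * x, ?_, ?_⟩
        · rw [mul_pow, hx, ← pow_mul, u.2, one_mul]
        · have := hU u
          simp [D]; field_simp⟩)
      (fun u => ⟨E u, by
        rw [aux_stab_iff]
        intro x hx
        have hx0 : x ≠ 0 := by rintro rfl; rw [zero_pow (by omega)] at hx; simp at hx
        refine ⟨(u : F) ^ 2 * x⁻¹, ?_, ?_⟩
        · rw [mul_pow, inv_pow, hx, ← pow_mul, u.2]; simp
        · have := hU u
          simp [E]; field_simp⟩)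
  have hf : Function.Bijective f := by
    constructor
    · rintro (u | u) (v | v) h
      · have h := congrArg (fun g => g.1.1 0 0) h
        simp [f, D] at h
        rw [Subtype.ext h]
      · have h := congrArg (fun g => g.1.1 0 0) h
        simp [f, D, E] at h
        exact absurd h (hU u)
      · have h := congrArg (fun g => g.1.1 0 0) h
        simp [f, D, E] at h
        exact absurd h.symm (hU v)
      · have h := congrArg (fun g => g.1.1 0 1) h
        simp [f, E, hi0] at h
        rw [Subtype.ext h]
    · rintro ⟨g, hg⟩
      have hg' := (aux_stab_iff k g).1 hg
      have hdet : g.1 0 0 * g.1 1 1 - g.1 0 1 * g.1 1 0 = 1 := by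
        rw [← Matrix.det_fin_two]; exact g.2
      have hpow : ∀ x : F, x ^ k = 1 →
          (g.1 0 0 * x + g.1 0 1) ^ k = (g.1 1 0 * x + g.1 1 1) ^ k := by
        intro x hx
        obtain ⟨y, hy, h⟩ := hg' x hx
        rw [h, mul_pow, hy, one_mul]
      have h1 := hpow 1 (one_pow k)
      rcases aux_poly k hk3 hkp hcard _ _ _ _ hdet hpow with ⟨hb, hc⟩ | ⟨ha, hd⟩
      · rw [hb, hc] at hdet h1
        simp at hdet h1
        refine ⟨Sum.inl ⟨g.1 0 0, ?_⟩, ?_⟩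
        · simp only [Set.mem_ofPred_eq]
          rw [two_mul, pow_add]; nth_rewrite 2 [h1]; rw [← mul_pow, hdet, one_pow]
        · apply Subtype.ext
          apply Subtype.ext
          ext r s
          fin_cases r <;> fin_cases s
          · simp [f, D]
          · simp [f, D, hb]
          · simp [f, D, hc]
          · simp [f, D]
            exact inv_eq_of_mul_eq_one_right hdet
      · rw [ha, hd] at hdet h1
        simp at hdet h1
        refine ⟨Sum.inr ⟨-i * g.1 0 1, ?_⟩, ?_⟩
        · simp only [Set.mem_ofPred_eq]
          rw [mul_pow, pow_mul (-i), two_mul, pow_add]; nth_rewrite 2 [h1]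
          rw [← mul_pow, ← mul_pow]
          have : (-i) ^ 2 * (g.1 0 1 * g.1 1 0) = 1 := by
            linear_combination (g.1 0 1 * g.1 1 0) * hi + hdet
          rw [this, one_pow]
        · have hb0 : g.1 0 1 ≠ 0 := by
            intro h0; rw [h0] at hdet; simp at hdet
          apply Subtype.ext
          apply Subtype.ext
          ext r s
          fin_cases r <;> fin_cases s
          · simp [f, E, ha]
          · simp [f, E]
            linear_combination -(g.1 0 1) * hi
          · simp [f, E]
            field_simp
            linear_combination hdet
          · simp [f, E, hd]
  rw [← Nat.card_congr (Equiv.ofBijective f hf), Nat.card_sum, Nat.card_coe_set_eq, hcard2]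
  ring

theorem aux_card_SL (F : Type) [Field F] [Fintype F] :
    Nat.card (Matrix.SpecialLinearGroup (Fin 2) F) =
      (Fintype.card F + 1) * Fintype.card F * (Fintype.card F - 1) := by
  classical
  have hGL := Matrix.card_GL_field (𝔽 := F) 2
  have hsurj : Function.Surjective (Matrix.GeneralLinearGroup.det (n := Fin 2) (R := F)) := by
    intro u
    refine ⟨Matrix.GeneralLinearGroup.mkOfDetNeZero !![(u : F), 0; 0, 1] (by simp), ?_⟩
    ext
    simp [Matrix.GeneralLinearGroup.mkOfDetNeZero]
  have hker : Nat.card (Matrix.SpecialLinearGroup (Fin 2) F) =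
      Nat.card (Matrix.GeneralLinearGroup.det (n := Fin 2) (R := F)).ker := by
    refine Nat.card_congr (Equiv.ofBijective (fun g => ⟨(g : GL (Fin 2) F), ?_⟩) ⟨?_, ?_⟩)
    · rw [MonoidHom.mem_ker]; ext; simp
    · intro g h hgh
      have := congrArg (fun z => (z.1 : Matrix (Fin 2) (Fin 2) F)) hgh
      exact Subtype.ext this
    · rintro ⟨g, hg⟩
      rw [MonoidHom.mem_ker] at hg
      refine ⟨⟨g.1, ?_⟩, ?_⟩
      · have := congrArg Units.val hg
        simpa using this
      · apply Subtype.ext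
        apply Units.ext
        rfl
  have hidx := Subgroup.card_mul_index (Matrix.GeneralLinearGroup.det (n := Fin 2) (R := F)).ker
  rw [Subgroup.index_ker, MonoidHom.range_eq_top.2 hsurj, ← hker, Subgroup.card_top,
    Nat.card_eq_fintype_card (α := Fˣ), Fintype.card_units, hGL] at hidx
  have h1 := Fintype.one_lt_card (α := F)
  simp only [Fin.prod_univ_two, Fin.val_zero, Fin.val_one, pow_zero, pow_one] at hidx
  obtain ⟨m, hm⟩ : ∃ m, Fintype.card F = m + 2 := ⟨Fintype.card F - 2, by omega⟩
  rw [hm] at hidx ⊢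
  simp only [show m + 2 - 1 = m + 1 by omega] at hidx ⊢
  have e1 : (m + 2) ^ 2 - 1 = (m + 3) * (m + 1) := by
    rw [Nat.sub_eq_iff_eq_add (by nlinarith)]; ring
  have e2 : (m + 2) ^ 2 - (m + 2) = (m + 2) * (m + 1) := by
    rw [Nat.sub_eq_iff_eq_add (by nlinarith)]; ring
  rw [e1, e2] at hidx
  apply Nat.eq_of_mul_eq_mul_right (show 0 < m + 1 by omega)
  rw [hidx]; ring

theorem aux_double (P : Type) [Finite P] (Bl : Set (Set P)) (k lam : ℕ)
    (hBl : ∀ S ∈ Bl, S.ncard = k)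
    (h : ∀ T : Finset P, T.card = 3 → {S ∈ Bl | (T : Set P) ⊆ S}.ncard = lam) :
    (Nat.card P).choose 3 * lam = Bl.ncard * k.choose 3 := by
  classical
  haveI := Fintype.ofFinite P
  have key := Finset.sum_card_bipartiteAbove_eq_sum_card_bipartiteBelow
    (fun (T : Finset P) (S : Set P) => (T : Set P) ⊆ S)
    (s := Finset.powersetCard 3 Finset.univ) (t := Bl.toFinset)
  rw [Finset.sum_congr rfl (g := fun _ => lam), Finset.sum_congr rfl (s₁ := Bl.toFinset) (g := fun _ => k.choose 3)] at key
  · simpa [Finset.card_powersetCard, Set.ncard_eq_toFinset_card'] using key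
  · intro S hS
    rw [← hBl S (by simpa using hS), Set.ncard_eq_toFinset_card', ← Finset.card_powersetCard]
    congr 1
    ext T
    simp [Finset.bipartiteBelow, Finset.mem_powersetCard, Finset.subset_iff, Set.subset_def, and_comm]
  · intro T hT
    rw [← h T (Finset.mem_powersetCard.1 hT).2, ← Set.ncard_coe_finset]
    congr 1
    ext S
    simp [Finset.bipartiteAbove]

theorem aux_choose3 (n : ℕ) : (n + 2).choose 3 * 6 = (n + 2) * (n + 1) * n := by
  have h := Nat.descFactorial_eq_factorial_mul_choose (n + 2) 3
  simp [Nat.descFactorial_succ, Nat.factorial] at h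
  linarith

/-- Theorem 2.5(ii): if `e = (q-1)/k` is even, `k` is less than the characteristic,
and `(q,k)` gives a `3-(q+1, k, lam)` design, then `lam = (k-1)(k-2)/4`. -/
theorem stmt_1 (F : Type) [Field F] [Fintype F] [DecidableEq F]
    (q k lam : ℕ) (hq : Fintype.card F = q) (hqodd : Odd q) (hq4 : q % 4 = 1)
    (hkdvd : k ∣ q - 1) (hk3 : 3 < k) (hkq : k < q - 1)
    (he : Even ((q - 1) / k)) (hkp : k < ringChar F)
    (hdes : isThreeDesign F k lam) :
    4 * lam = (k - 1) * (k - 2) := by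
  have h2k : 2 * k ∣ q - 1 := by
    obtain ⟨e, he'⟩ := hkdvd
    rw [he', Nat.mul_div_cancel_left _ (by omega)] at he
    obtain ⟨r, hr⟩ := he
    exact ⟨r, by rw [he', hr]; ring⟩
  obtain ⟨i, hi⟩ : IsSquare (-1 : F) := by
    rw [FiniteField.isSquare_neg_one_iff, hq, hq4]; norm_num
  have hst := aux_stab_card F k hk3 hkp (hq ▸ h2k) i hi.symm
  have hcard := aux_roots F k (by omega) (hq ▸ hkdvd)
  have horb : designBlocks F k =
      MulAction.orbit (Matrix.SpecialLinearGroup (Fin 2) F) (starterB F k) := by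
    ext S
    simp only [designBlocks, Set.mem_ofPred_eq, MulAction.mem_orbit_iff, aux_smul, eq_comm]
  have hdc := aux_double _ (designBlocks F k) k lam (by
    rintro S ⟨g, rfl⟩
    rw [← aux_smul, Set.ncard_smul_set, aux_starter_ncard F k hcard]) hdes.2
  have hP := Projectivization.card_of_finrank_two F (Fin 2 → F) (by simp)
  have hos : (designBlocks F k).ncard * (4 * k) = (q + 1) * q * (q - 1) := by
    rw [horb, ← hst, ← hq, ← aux_card_SL F, ← Nat.card_coe_set_eq, ← Nat.card_prod]
    exact Nat.card_congr (MulAction.orbitProdStabilizerEquivGroup _ _)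
  rw [hP, Nat.card_eq_fintype_card, hq] at hdc
  obtain ⟨n, rfl⟩ : ∃ n, q = n + 1 := ⟨q - 1, by omega⟩
  obtain ⟨m, rfl⟩ : ∃ m, k = m + 2 := ⟨k - 2, by omega⟩
  have c1 := aux_choose3 n
  have c2 := aux_choose3 m
  simp only [Nat.add_sub_cancel, show m + 2 - 1 = m + 1 by omega] at *
  generalize (designBlocks F (m + 2)).ncard = b at *
  have hpos : 0 < (n + 2) * (n + 1) * n := by
    have : 0 < n := by omega
    positivity
  apply Nat.eq_of_mul_eq_mul_left hpos
  have : (n + 2) * (n + 1) * n * lam = b * ((m + 2) * (m + 1) * m) := by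
    rw [← c1, ← c2]; linarith
  calc (n + 2) * (n + 1) * n * (4 * lam) = 4 * ((n + 2) * (n + 1) * n * lam) := by ring
    _ = b * (4 * (m + 2)) * ((m + 1) * m) := by rw [this]; ring
    _ = _ := by rw [hos]
end
end

section
/- Let q be a prime power with q ≡ 1 (mod 4) and let α be a primitive root (generator of the multiplicative group) of F_q. Then the action of PSL(2,q) on the set of 3-element subsets of PG(1,q) has exactly two orbits, with representatives T₊ = {∞, 0, 1} and T₋ = {∞, 0, α}. Moreover, the setwise stabilizer of T₊ (respectively T₋) in PSL(2,q) induces the full symmetric group of degree 3 on T₊ (respectively T₋). -/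
/-!
Setting: `F` is a finite field of order `q`. The projective line `PG(1,q)` is
modelled as `Projectivization F (Fin 2 → F)`. Since scalar matrices act trivially
on the projective line, the images of a set under all elements of `SL(2,F)` form
exactly its `PSL(2,F)`-orbit; `mapSL g` is the map of the projective line induced
by `g : SL(2,F)`. For `k ∣ q - 1`, the unique subgroup of order `k` of `Fˣ` is the
set of `k`-th roots of unity `{x : F | x ^ k = 1}`, embedded into the projective
line via `x ↦ [x : 1]`. `(q, k)` gives a 3-design iff there is `lam > 0` such that
every 3-subset of the projective line lies in exactly `lam` blocks of the orbit.
-/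

noncomputable section

open Matrix

/-- The 3-subset `{∞, 0, 1}` of the projective line. -/
def Tplus (F : Type) [Field F] : Set (Projectivization F (Fin 2 → F)) :=
  {inftyPt F, embedPt F 0, embedPt F 1}

/-- The 3-subset `{∞, 0, α}` of the projective line. -/
def Tminus (F : Type) [Field F] (a : F) : Set (Projectivization F (Fin 2 → F)) :=
  {inftyPt F, embedPt F 0, embedPt F a}

def dt {F : Type} [Field F] (u v : Fin 2 → F) : F := u 0 * v 1 - u 1 * v 0

def DD {F : Type} [Field F] (p1 p2 p3 : Projectivization F (Fin 2 → F)) : F :=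
  dt p1.rep p2.rep * dt p2.rep p3.rep * dt p3.rep p1.rep

lemma dt_ne {F : Type} [Field F] {p1 p2 : Projectivization F (Fin 2 → F)} (h : p1 ≠ p2) :
    dt p1.rep p2.rep ≠ 0 := by
  intro h0
  apply h
  rw [← p1.mk_rep, ← p2.mk_rep, Projectivization.mk_eq_mk_iff']
  have h2 := p2.rep_nonzero
  unfold dt at h0
  by_cases h20 : p2.rep 0 = 0
  · have h21 : p2.rep 1 ≠ 0 := by
      intro h21
      apply h2
      ext i
      fin_cases i <;> simp [h20, h21]
    refine ⟨p1.rep 1 / p2.rep 1, ?_⟩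
    ext i
    fin_cases i
    · simp; field_simp; grind
    · simp; field_simp
  · refine ⟨p1.rep 0 / p2.rep 0, ?_⟩
    ext i
    fin_cases i
    · simp; field_simp
    · simp; field_simp; grind

lemma dt_self {F : Type} [Field F] (u : Fin 2 → F) : dt u u = 0 := by
  unfold dt; ring

lemma DD_mk {F : Type} [Field F] (v1 v2 v3 : Fin 2 → F) (h1 : v1 ≠ 0) (h2 : v2 ≠ 0)
    (h3 : v3 ≠ 0) : ∃ s : F, s ≠ 0 ∧
    DD (Projectivization.mk F v1 h1) (Projectivization.mk F v2 h2) (Projectivization.mk F v3 h3)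
      = s ^ 2 * (dt v1 v2 * dt v2 v3 * dt v3 v1) := by
  obtain ⟨a, ha⟩ := Projectivization.exists_smul_eq_mk_rep F v1 h1
  obtain ⟨b, hb⟩ := Projectivization.exists_smul_eq_mk_rep F v2 h2
  obtain ⟨c, hc⟩ := Projectivization.exists_smul_eq_mk_rep F v3 h3
  refine ⟨a * b * c, by simp, ?_⟩
  unfold DD
  rw [← ha, ← hb, ← hc]
  simp only [dt, Pi.smul_apply, Units.smul_def, smul_eq_mul]
  ring

lemma DD_map {F : Type} [Field F] (g : Matrix.SpecialLinearGroup (Fin 2) F)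
    (p1 p2 p3 : Projectivization F (Fin 2 → F)) : ∃ s : F, s ≠ 0 ∧
    DD (mapSL g p1) (mapSL g p2) (mapSL g p3) = s ^ 2 * DD p1 p2 p3 := by
  have key : ∀ u v : Fin 2 → F, dt (Matrix.SpecialLinearGroup.toLin' g u)
      (Matrix.SpecialLinearGroup.toLin' g v) = dt u v := by
    intro u v
    have hd := g.det_coe
    rw [Matrix.det_fin_two] at hd
    simp only [dt, Matrix.SpecialLinearGroup.toLin'_apply, Matrix.toLin'_apply, Matrix.mulVec,
      dotProduct, Fin.sum_univ_two]
    linear_combination (u 0 * v 1 - u 1 * v 0) * hd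
  have hm : ∀ p : Projectivization F (Fin 2 → F), ∃ h, mapSL g p =
      Projectivization.mk F (Matrix.SpecialLinearGroup.toLin' g p.rep) h := by
    intro p
    refine ⟨?_, ?_⟩
    · simpa using p.rep_nonzero
    · conv_lhs => rw [← p.mk_rep]
      rfl
  obtain ⟨h1, e1⟩ := hm p1
  obtain ⟨h2, e2⟩ := hm p2
  obtain ⟨h3, e3⟩ := hm p3
  obtain ⟨s, hs, h⟩ := DD_mk _ _ _ h1 h2 h3
  refine ⟨s, hs, ?_⟩
  rw [e1, e2, e3, h, key, key, key]
  rfl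

lemma exists_g {F : Type} [Field F] (c s : F) (hc : c ≠ 0) (hs : s ≠ 0)
    (p1 p2 p3 : Projectivization F (Fin 2 → F)) (h12 : p1 ≠ p2)
    (h31 : p3 ≠ p1) (h : DD p1 p2 p3 = s ^ 2 * c) :
    ∃ g, mapSL g (inftyPt F) = p1 ∧ mapSL g (embedPt F 0) = p2 ∧ mapSL g (embedPt F c) = p3 := by
  have d12 := dt_ne h12
  have d31 := dt_ne h31
  set x := s / (dt p1.rep p2.rep * dt p3.rep p1.rep) with hx
  set y := dt p3.rep p1.rep / s with hy
  have hx0 : x ≠ 0 := by rw [hx]; positivity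
  have hy0 : y ≠ 0 := by rw [hy]; positivity
  have hxy : x * y * dt p1.rep p2.rep = 1 := by rw [hx, hy]; field_simp
  have hdet : (!![x * p1.rep 0, y * p2.rep 0; x * p1.rep 1, y * p2.rep 1]).det = 1 := by
    rw [Matrix.det_fin_two_of]
    rw [← hxy]; unfold dt; ring
  have hm : ∀ (v : Fin 2 → F) (hv : v ≠ 0) (p : Projectivization F (Fin 2 → F)) (k : F),
      k * p.rep 0 = x * p1.rep 0 * v 0 + y * p2.rep 0 * v 1 →
      k * p.rep 1 = x * p1.rep 1 * v 0 + y * p2.rep 1 * v 1 →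
      mapSL (⟨_, hdet⟩ : Matrix.SpecialLinearGroup (Fin 2) F) (Projectivization.mk F v hv) = p := by
    intro v hv p k h0 h1
    conv_rhs => rw [← p.mk_rep]
    unfold mapSL
    rw [Projectivization.map_mk, Projectivization.mk_eq_mk_iff']
    refine ⟨k, ?_⟩
    ext i
    fin_cases i
    · change k * p.rep 0 = (Matrix.mulVec !![x * p1.rep 0, y * p2.rep 0; x * p1.rep 1, y * p2.rep 1] v) 0
      rw [h0]
      simp [Matrix.mulVec, dotProduct]
    · change k * p.rep 1 = (Matrix.mulVec !![x * p1.rep 0, y * p2.rep 0; x * p1.rep 1, y * p2.rep 1] v) 1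
      rw [h1]
      simp [Matrix.mulVec, dotProduct]
  refine ⟨⟨_, hdet⟩, hm _ _ _ x ?_ ?_, hm _ _ _ y ?_ ?_, hm _ _ _ (-1 / s * dt p1.rep p2.rep) ?_ ?_⟩
  · simp
  · simp
  · simp
  · simp
  all_goals
    simp only [Matrix.cons_val_zero, Matrix.cons_val_one, mul_one, hx, hy]
    field_simp
    unfold DD at h
    unfold dt at *
    grind

lemma perm_DD {F : Type} [Field F] (i : F) (hi : i ^ 2 = -1) (c : F) (hc : c ≠ 0)
    (p1 p2 p3 : Projectivization F (Fin 2 → F)) (h12 : p1 ≠ p2) (h23 : p2 ≠ p3)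
    (h31 : p3 ≠ p1) (h1 : p1 ∈ Tminus F c) (h2 : p2 ∈ Tminus F c) (h3 : p3 ∈ Tminus F c) :
    ∃ s : F, s ≠ 0 ∧ DD p1 p2 p3 = s ^ 2 * c := by
  have hi0 : i ≠ 0 := by rintro rfl; simp at hi
  obtain ⟨s, hs, h⟩ : ∃ s : F, s ≠ 0 ∧ DD (inftyPt F) (embedPt F 0) (embedPt F c) = s ^ 2 * c := by
    obtain ⟨s, hs, h⟩ := DD_mk (F := F) ![1, 0] ![0, 1] ![c, 1]
      (by intro h; simpa using congrFun h 0) (by intro h; simpa using congrFun h 1)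
      (by intro h; simpa using congrFun h 1)
    refine ⟨s, hs, ?_⟩
    refine h.trans ?_
    simp [dt]
  simp only [Tminus, Set.mem_insert_iff, Set.mem_singleton_iff] at h1 h2 h3
  have H : DD p1 p2 p3 = s ^ 2 * c ∨ DD p1 p2 p3 = -(s ^ 2 * c) := by
    rw [← h]
    rcases h1 with rfl | rfl | rfl <;> rcases h2 with rfl | rfl | rfl <;>
      rcases h3 with rfl | rfl | rfl <;> first | contradiction | skip
    all_goals
      unfold DD dt
      first | (left; ring1) | (right; ring1)
  rcases H with H | H
  · exact ⟨s, hs, H⟩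
  · exact ⟨i * s, mul_ne_zero hi0 hs, by rw [H, mul_pow, hi]; ring⟩

lemma pts_ne {F : Type} [Field F] (c : F) (hc : c ≠ 0) :
    inftyPt F ≠ embedPt F 0 ∧ embedPt F 0 ≠ embedPt F c ∧ embedPt F c ≠ inftyPt F := by
  unfold inftyPt embedPt
  refine ⟨?_, ?_, ?_⟩ <;> rw [Ne, Projectivization.mk_eq_mk_iff'] <;> rintro ⟨a, ha⟩ <;>
    have h0 := congrFun ha 0 <;> have h1 := congrFun ha 1 <;> simp at h0 h1 <;> grind

lemma full_perm {F : Type} [Field F] (i : F) (hi : i ^ 2 = -1) (c : F) (hc : c ≠ 0)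
    (σ : Equiv.Perm (Tminus F c)) : ∃ g, ∀ t : Tminus F c, mapSL g t.1 = (σ t).1 := by
  obtain ⟨n1, n2, n3⟩ := pts_ne c hc
  have m1 : inftyPt F ∈ Tminus F c := by simp [Tminus]
  have m2 : embedPt F 0 ∈ Tminus F c := by simp [Tminus]
  have m3 : embedPt F c ∈ Tminus F c := by simp [Tminus]
  have hne : ∀ a b (ha : a ∈ Tminus F c) (hb : b ∈ Tminus F c), a ≠ b →
      (σ ⟨a, ha⟩).1 ≠ (σ ⟨b, hb⟩).1 := by
    intro a b ha hb hab h
    have := σ.injective (Subtype.ext h)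
    exact hab (congrArg Subtype.val this)
  have k1 := hne _ _ m1 m2 n1
  have k2 := hne _ _ m2 m3 n2
  have k3 := hne _ _ m3 m1 n3
  obtain ⟨s, hs, h⟩ := perm_DD i hi c hc _ _ _ k1 k2 k3 (σ _).2 (σ _).2 (σ _).2
  obtain ⟨g, g1, g2, g3⟩ := exists_g c s hc hs _ _ _ k1 k3 h
  refine ⟨g, ?_⟩
  rintro ⟨t, ht⟩
  have ht' := ht
  simp only [Tminus, Set.mem_insert_iff, Set.mem_singleton_iff] at ht'
  rcases ht' with rfl | rfl | rfl
  · exact g1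
  · exact g2
  · exact g3

/-- Lemma 2.2: for `q ≡ 1 (mod 4)` there are exactly two `PSL(2,q)`-orbits on
3-subsets of the projective line, with representatives `{∞,0,1}` and `{∞,0,α}`
(`α` a primitive root); moreover the setwise stabilizer of each representative
induces the full symmetric group on it. -/
theorem stmt_2 (F : Type) [Field F] [Fintype F] [DecidableEq F]
    (q : ℕ) (hq : Fintype.card F = q) (hq4 : q % 4 = 1)
    (α : Fˣ) (hα : ∀ x : Fˣ, x ∈ Subgroup.zpowers α) :
    (∀ S : Set (Projectivization F (Fin 2 → F)), S.ncard = 3 →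
      (∃ g, mapSL g '' Tplus F = S) ∨ (∃ g, mapSL g '' Tminus F (α : F) = S))
    ∧ (¬ ∃ g, mapSL g '' Tplus F = Tminus F (α : F))
    ∧ (∀ σ : Equiv.Perm (Tplus F),
        ∃ g, ∀ t : Tplus F, mapSL g t.1 = (σ t).1)
    ∧ (∀ σ : Equiv.Perm (Tminus F (α : F)),
        ∃ g, ∀ t : Tminus F (α : F), mapSL g t.1 = (σ t).1) := by
  have hi : ∃ i : F, i ^ 2 = -1 := by
    have : IsSquare (-1 : F) := by
      rw [FiniteField.isSquare_neg_one_iff]; omega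
    obtain ⟨i, hi⟩ := this
    exact ⟨i, by rw [hi]; ring⟩
  obtain ⟨i, hi⟩ := hi
  have hTp : Tplus F = Tminus F 1 := rfl
  have hα0 : (α : F) ≠ 0 := α.ne_zero
  have hcls : ∀ x : F, x ≠ 0 → ∃ s : F, s ≠ 0 ∧ (x = s ^ 2 * 1 ∨ x = s ^ 2 * α) := by
    intro x hx
    obtain ⟨n, hn⟩ := hα (Units.mk0 x hx)
    have hn' : ((α ^ n : Fˣ) : F) = x := by
      have := congrArg Units.val hn
      simpa using this
    obtain ⟨k, hk | hk⟩ := Int.even_or_odd' n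
    · refine ⟨((α ^ k : Fˣ) : F), Units.ne_zero _, Or.inl ?_⟩
      rw [← hn', hk, mul_one, ← Units.val_pow_eq_pow_val, mul_comm, _root_.zpow_mul]
      rfl
    · refine ⟨((α ^ k : Fˣ) : F), Units.ne_zero _, Or.inr ?_⟩
      rw [← hn', hk, ← Units.val_pow_eq_pow_val, ← Units.val_mul, _root_.zpow_add, mul_comm 2 k, _root_.zpow_mul,
        zpow_one]
      rfl
  have hnsq : ∀ s : F, s ^ 2 ≠ α := by
    intro s hs
    have hchar : ringChar F ≠ 2 := by
      intro h
      have := FiniteField.even_card_iff_char_two.mp h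
      omega
    obtain ⟨a, ha⟩ := FiniteField.exists_nonsquare hchar
    apply ha
    by_cases ha0 : a = 0
    · exact ⟨0, by simp [ha0]⟩
    obtain ⟨t, -, h | h⟩ := hcls a ha0
    · exact ⟨t, by rw [h]; ring⟩
    · exact ⟨t * s, by rw [h, ← hs]; ring⟩
  refine ⟨?_, ?_, ?_, fun σ => full_perm i hi _ hα0 σ⟩
  · intro S hS
    obtain ⟨p1, p2, p3, h12, h13, h23, rfl⟩ := Set.ncard_eq_three.mp hS
    have hD : DD p1 p2 p3 ≠ 0 :=
      mul_ne_zero (mul_ne_zero (dt_ne h12) (dt_ne h23)) (dt_ne h13.symm)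
    have himg : ∀ c s : F, c ≠ 0 → s ≠ 0 → DD p1 p2 p3 = s ^ 2 * c →
        ∃ g, mapSL g '' Tminus F c = {p1, p2, p3} := by
      intro c s hc hs h
      obtain ⟨g, g1, g2, g3⟩ := exists_g c s hc hs _ _ _ h12 h13.symm h
      exact ⟨g, by simp only [Tminus, Set.image_insert_eq, Set.image_singleton, g1, g2, g3]⟩
    obtain ⟨s, hs, h | h⟩ := hcls _ hD
    · exact Or.inl (himg 1 s one_ne_zero hs h)
    · exact Or.inr (himg α s hα0 hs h)
  · rintro ⟨g, hg⟩
    rw [hTp] at hg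
    obtain ⟨n1, n2, n3⟩ := pts_ne (1 : F) one_ne_zero
    have m1 : inftyPt F ∈ Tminus F 1 := by simp [Tminus]
    have m2 : embedPt F 0 ∈ Tminus F 1 := by simp [Tminus]
    have m3 : embedPt F 1 ∈ Tminus F 1 := by simp [Tminus]
    have inj : Function.Injective (mapSL g) := Projectivization.map_injective _ _
    obtain ⟨s, hs, h⟩ := perm_DD i hi α hα0 _ _ _ (inj.ne n1) (inj.ne n2) (inj.ne n3)
      (hg ▸ Set.mem_image_of_mem _ m1) (hg ▸ Set.mem_image_of_mem _ m2)
      (hg ▸ Set.mem_image_of_mem _ m3)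
    obtain ⟨t, ht, h'⟩ := perm_DD i hi 1 one_ne_zero _ _ _ n1 n2 n3 m1 m2 m3
    obtain ⟨u, hu, h''⟩ := DD_map g (inftyPt F) (embedPt F 0) (embedPt F 1)
    apply hnsq (u * t / s)
    rw [h, h'] at h''
    field_simp
    linear_combination -h''
  · intro σ
    exact full_perm i hi 1 one_ne_zero σ
end
end

section
/- Let q be a prime power with q ≡ 1 (mod 4), let α be a primitive root of F_q, and let O₊ and O₋ be the PSL(2,q)-orbits on 3-subsets of PG(1,q) containing {∞,0,1} and {∞,0,α}, respectively. Define Δ({z₁,z₂,z₃}) = χ((z₁−z₂)(z₂−z₃)(z₃−z₁)) for 3-subsets {z₁,z₂,z₃} of F_q, where χ is the quadratic residue character of F_q. Then Δ is well defined (independent of the ordering of z₁,z₂,z₃), and a 3-subset {z₁,z₂,z₃} of F_q lies in O₊ if and only if Δ({z₁,z₂,z₃}) = 1, and lies in O₋ if and only if Δ({z₁,z₂,z₃}) = −1. -/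
/-!
Setting: `F` is a finite field of order `q`. The projective line `PG(1,q)` is
modelled as `Projectivization F (Fin 2 → F)`. Since scalar matrices act trivially
on the projective line, the images of a set under all elements of `SL(2,F)` form
exactly its `PSL(2,F)`-orbit; `mapSL g` is the map of the projective line induced
by `g : SL(2,F)`. For `k ∣ q - 1`, the unique subgroup of order `k` of `Fˣ` is the
set of `k`-th roots of unity `{x : F | x ^ k = 1}`, embedded into the projective
line via `x ↦ [x : 1]`. `(q, k)` gives a 3-design iff there is `lam > 0` such that
every 3-subset of the projective line lies in exactly `lam` blocks of the orbit.
-/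

noncomputable section

open Matrix

lemma embed_mem_aux {F : Type} [Field F] (v : Fin 2 → F) (hv : v ≠ 0) (x : F) :
    Projectivization.mk F v hv = embedPt F x ↔ v 1 ≠ 0 ∧ v 0 = x * v 1 := by
  unfold embedPt
  rw [Projectivization.mk_eq_mk_iff']
  constructor
  · rintro ⟨a, ha⟩
    have h0 := congrFun ha 0
    have h1 := congrFun ha 1
    simp at h0 h1
    have hne : v 1 ≠ 0 := by
      intro h
      apply hv
      rw [h] at h1
      subst h1
      funext i
      fin_cases i
      · simpa using h0.symm
      · simpa using h
    exact ⟨hne, by rw [← h0, ← h1]; ring⟩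
  · rintro ⟨h1, h0⟩
    refine ⟨v 1, ?_⟩
    funext i
    fin_cases i
    · simp [h0, mul_comm]
    · simp

lemma embedPt_inj_aux {F : Type} [Field F] {x y : F} (h : embedPt F x = embedPt F y) : x = y := by
  have := (embed_mem_aux ![x, 1] _ y).1 h
  simpa using this.2

lemma map_infty_aux {F : Type} [Field F] (g : Matrix.SpecialLinearGroup (Fin 2) F) (x : F) :
    mapSL g (inftyPt F) = embedPt F x ↔ g.1 1 0 ≠ 0 ∧ g.1 0 0 = x * g.1 1 0 := by
  unfold mapSL inftyPt
  rw [Projectivization.map_mk, embed_mem_aux]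
  simp [Matrix.SpecialLinearGroup.toLin'_apply, Matrix.mulVec, dotProduct, Fin.sum_univ_two]

lemma map_embed_aux {F : Type} [Field F] (g : Matrix.SpecialLinearGroup (Fin 2) F) (y x : F) :
    mapSL g (embedPt F y) = embedPt F x ↔ g.1 1 0 * y + g.1 1 1 ≠ 0 ∧
      g.1 0 0 * y + g.1 0 1 = x * (g.1 1 0 * y + g.1 1 1) := by
  conv_lhs => lhs; unfold mapSL embedPt
  rw [Projectivization.map_mk, embed_mem_aux]
  simp [Matrix.SpecialLinearGroup.toLin'_apply, Matrix.mulVec, dotProduct, Fin.sum_univ_two]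

lemma perm_aux {F : Type} [Field F] (z : Fin 3 → F) (i j k : Fin 3) (h1 : i ≠ j) (h2 : j ≠ k)
    (h3 : k ≠ i) :
    (z i - z j) * ((z j - z k) * (z k - z i)) = (z 0 - z 1) * ((z 1 - z 2) * (z 2 - z 0)) ∨
    (z i - z j) * ((z j - z k) * (z k - z i)) = - ((z 0 - z 1) * ((z 1 - z 2) * (z 2 - z 0))) := by
  fin_cases i <;> fin_cases j <;> fin_cases k <;> simp at h1 h2 h3 ⊢ <;>
    first
    | (left; ring1)
    | (right; ring1)

lemma char_perm_aux {F : Type} [Field F] [Fintype F] [DecidableEq F]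
    (hq4 : Fintype.card F % 4 = 1) (z : Fin 3 → F) (i j k : Fin 3) (h1 : i ≠ j) (h2 : j ≠ k)
    (h3 : k ≠ i) :
    quadraticChar F ((z i - z j) * ((z j - z k) * (z k - z i))) =
      quadraticChar F ((z 0 - z 1) * ((z 1 - z 2) * (z 2 - z 0))) := by
  rcases perm_aux z i j k h1 h2 h3 with h | h
  · rw [h]
  · rw [h, ← neg_one_mul, map_mul]
    have : quadraticChar F (-1) = 1 := by
      rw [quadraticChar_one_iff_isSquare (by simp), FiniteField.isSquare_neg_one_iff]
      omega
    rw [this, one_mul]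

lemma orbit_aux {F : Type} [Field F] [Fintype F] [DecidableEq F]
    (hq4 : Fintype.card F % 4 = 1) (a : F) (ha : a ≠ 0)
    (z : Fin 3 → F) (hz : Function.Injective z) :
    (∃ g, mapSL g '' Tminus F a = embedPt F '' Set.range z) ↔
      quadraticChar F (a * ((z 0 - z 1) * ((z 1 - z 2) * (z 2 - z 0)))) = 1 := by
  have e01 : z 0 - z 1 ≠ 0 := sub_ne_zero.2 (hz.ne (by decide))
  have e12 : z 1 - z 2 ≠ 0 := sub_ne_zero.2 (hz.ne (by decide))
  have e20 : z 2 - z 0 ≠ 0 := sub_ne_zero.2 (hz.ne (by decide))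
  constructor
  · rintro ⟨g, hg⟩
    have key : ∀ P ∈ Tminus F a, ∃ i, mapSL g P = embedPt F (z i) := by
      intro P hP
      have : mapSL g P ∈ embedPt F '' Set.range z := hg ▸ Set.mem_image_of_mem _ hP
      obtain ⟨_, ⟨i, rfl⟩, h⟩ := this
      exact ⟨i, h.symm⟩
    obtain ⟨i, hi⟩ := key (inftyPt F) (by simp [Tminus])
    obtain ⟨j, hj⟩ := key (embedPt F 0) (by simp [Tminus])
    obtain ⟨k, hk⟩ := key (embedPt F a) (by simp [Tminus])
    rw [map_infty_aux] at hi
    rw [map_embed_aux] at hj hk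
    have hdet := g.2
    rw [Matrix.det_fin_two] at hdet
    generalize g.1 0 0 = p at *
    generalize g.1 0 1 = q at *
    generalize g.1 1 0 = r at *
    generalize g.1 1 1 = s at *
    obtain ⟨hr, rfl⟩ := hi
    obtain ⟨hs, hq⟩ := hj
    obtain ⟨hu, hk⟩ := hk
    simp only [mul_zero, zero_add] at hs hq
    subst hq
    have d1 : (z i - z j) * (r * s) = 1 := by linear_combination hdet
    have d2 : (z j - z k) * (s * (r * a + s)) = -a := by
      linear_combination s * hk - a * hdet
    have d3 : (z k - z i) * (r * (r * a + s)) = -1 := by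
      linear_combination (-r) * hk - hdet
    have h1 : i ≠ j := by rintro rfl; simp at d1
    have h2 : j ≠ k := by rintro rfl; simp at d2; exact ha d2
    have h3 : k ≠ i := by rintro rfl; simp at d3
    rw [map_mul, ← char_perm_aux hq4 z i j k h1 h2 h3, ← map_mul]
    have n1 := sub_ne_zero.2 (hz.ne h1)
    have n2 := sub_ne_zero.2 (hz.ne h2)
    have n3 := sub_ne_zero.2 (hz.ne h3)
    rw [quadraticChar_one_iff_isSquare (by simp [ha, n1, n2, n3])]
    refine ⟨a / (r * s * (r * a + s)), ?_⟩
    have : (z i - z j) * ((z j - z k) * (z k - z i)) * (r * s * (r * a + s)) ^ 2 = a := by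
      calc _ = ((z i - z j) * (r * s)) * ((z j - z k) * (s * (r * a + s))) *
            ((z k - z i) * (r * (r * a + s))) := by ring
        _ = a := by rw [d1, d2, d3]; ring
    rw [div_mul_div_comm, eq_div_iff (by simp [hr, hs, hu])]
    linear_combination a * this
  · intro h
    rw [quadraticChar_one_iff_isSquare (by simp [ha, e01, e12, e20])] at h
    obtain ⟨t, ht⟩ := h
    have ht0 : t ≠ 0 := by
      rintro rfl
      simp [ha, e01, e12, e20] at ht
    obtain ⟨r, hr⟩ : ∃ r, r = (z 1 - z 2) / t := ⟨_, rfl⟩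
    obtain ⟨s, hs⟩ : ∃ s, s = t / ((z 0 - z 1) * (z 1 - z 2)) := ⟨_, rfl⟩
    have hr0 : r ≠ 0 := by rw [hr]; exact div_ne_zero e12 ht0
    have hs0 : s ≠ 0 := by rw [hs]; exact div_ne_zero ht0 (mul_ne_zero e01 e12)
    have hrs : (z 0 - z 1) * (r * s) = 1 := by rw [hr, hs]; field_simp
    have hra : (z 0 - z 2) * r * a = (z 2 - z 1) * s := by
      rw [hr, hs]
      field_simp
      linear_combination (z 2 - z 1) * ht
    have hu0 : r * a + s ≠ 0 := by
      intro h
      have h2 : (z 0 - z 1) * s = 0 := by linear_combination (z 0 - z 2) * h - hra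
      simp [e01, hs0] at h2
    let g : Matrix.SpecialLinearGroup (Fin 2) F := ⟨!![z 0 * r, z 1 * s; r, s], by
      rw [Matrix.det_fin_two]; simp; linear_combination hrs⟩
    refine ⟨g, ?_⟩
    have g1 : mapSL g (inftyPt F) = embedPt F (z 0) := by
      rw [map_infty_aux]; simp [g, hr0]
    have g2 : mapSL g (embedPt F 0) = embedPt F (z 1) := by
      rw [map_embed_aux]; simp [g, hs0]
    have g3 : mapSL g (embedPt F a) = embedPt F (z 2) := by
      rw [map_embed_aux]; simp [g, hu0]; linear_combination hra
    have hrange : Set.range z = {z 0, z 1, z 2} := by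
      ext x
      simp [Fin.exists_fin_succ, eq_comm]
    rw [Tminus, hrange]
    simp [Set.image_insert_eq, g1, g2, g3]

/-- Lemma 2.3: `Δ({z₁,z₂,z₃}) = χ((z₁-z₂)(z₂-z₃)(z₃-z₁))` is well defined
(invariant under permutations of the zᵢ), and a 3-subset `{z₁,z₂,z₃} ⊆ F` lies
in the orbit of `{∞,0,1}` iff `Δ = 1`, and in the orbit of `{∞,0,α}` iff `Δ = -1`. -/
theorem stmt_3 (F : Type) [Field F] [Fintype F] [DecidableEq F]
    (q : ℕ) (hq : Fintype.card F = q) (hq4 : q % 4 = 1)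
    (α : Fˣ) (hα : ∀ x : Fˣ, x ∈ Subgroup.zpowers α)
    (z : Fin 3 → F) (hz : Function.Injective z) :
    (∀ σ : Equiv.Perm (Fin 3),
      quadraticChar F ((z (σ 0) - z (σ 1)) * ((z (σ 1) - z (σ 2)) * (z (σ 2) - z (σ 0)))) =
        quadraticChar F ((z 0 - z 1) * ((z 1 - z 2) * (z 2 - z 0))))
    ∧ ((∃ g, mapSL g '' Tplus F = embedPt F '' Set.range z) ↔
        quadraticChar F ((z 0 - z 1) * ((z 1 - z 2) * (z 2 - z 0))) = 1)
    ∧ ((∃ g, mapSL g '' Tminus F (α : F) = embedPt F '' Set.range z) ↔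
        quadraticChar F ((z 0 - z 1) * ((z 1 - z 2) * (z 2 - z 0))) = -1) := by
  subst hq
  refine ⟨?_, ?_, ?_⟩
  · intro σ
    exact char_perm_aux hq4 z _ _ _ (σ.injective.ne (by decide)) (σ.injective.ne (by decide))
      (σ.injective.ne (by decide))
  · have := orbit_aux hq4 1 one_ne_zero z hz
    rw [one_mul] at this
    exact this
  · rw [orbit_aux hq4 (α : F) α.ne_zero z hz, map_mul]
    have hF : ringChar F ≠ 2 := by
      intro h
      have := FiniteField.even_card_of_char_two h
      omega
    have hα1 : quadraticChar F (α : F) = -1 := by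
      rw [quadraticChar_neg_one_iff_not_isSquare]
      rintro ⟨b, hb⟩
      obtain ⟨c, hc⟩ := FiniteField.exists_nonsquare hF
      have hc0 : c ≠ 0 := by
        rintro rfl
        exact hc (IsSquare.zero)
      obtain ⟨n, hn⟩ := Subgroup.mem_zpowers_iff.1 (hα (Units.mk0 c hc0))
      apply hc
      refine ⟨b ^ n, ?_⟩
      have := congrArg (Units.val) hn
      rw [Units.val_zpow_eq_zpow_val, Units.val_mk0] at this
      rw [← this, hb, mul_zpow]
    rw [hα1]
    constructor <;> intro h <;> linarith
end
end

section
/- Let q be an odd prime power with q ≡ 1 (mod 4), let k be a divisor of q−1 with 3 < k < q−1, and suppose e = (q−1)/k is even. Then (q,k) gives a 3-design if and only if the sum of Δ({x,y,z}) over all 3-element subsets {x,y,z} of B equals 0, where Δ({z₁,z₂,z₃}) = χ((z₁−z₂)(z₂−z₃)(z₃−z₁)) and χ is the quadratic residue character of F_q. -/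
/-!
Setting: `F` is a finite field of order `q`. The projective line `PG(1,q)` is
modelled as `Projectivization F (Fin 2 → F)`. Since scalar matrices act trivially
on the projective line, the images of a set under all elements of `SL(2,F)` form
exactly its `PSL(2,F)`-orbit; `mapSL g` is the map of the projective line induced
by `g : SL(2,F)`. For `k ∣ q - 1`, the unique subgroup of order `k` of `Fˣ` is the
set of `k`-th roots of unity `{x : F | x ^ k = 1}`, embedded into the projective
line via `x ↦ [x : 1]`. `(q, k)` gives a 3-design iff there is `lam > 0` such that
every 3-subset of the projective line lies in exactly `lam` blocks of the orbit.
-/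

noncomputable section

open Matrix

namespace S4
variable {F : Type} [Field F]

def dt (a b : Fin 2 → F) : F := a 0 * b 1 - a 1 * b 0

abbrev PP (F : Type) [Field F] := Projectivization F (Fin 2 → F)

lemma mk_eq_of {u v : Fin 2 → F} (hu : u ≠ 0) (hv : v ≠ 0) (h : dt u v = 0) :
    Projectivization.mk F u hu = Projectivization.mk F v hv := by
  rw [Projectivization.mk_eq_mk_iff']
  unfold dt at h
  by_cases h0 : v 0 = 0
  · have h1 : v 1 ≠ 0 := by
      intro h1; apply hv; ext i; fin_cases i <;> simp [h0, h1]
    refine ⟨u 1 / v 1, ?_⟩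
    have hu0 : u 0 = 0 := by
      rw [h0] at h
      have : u 0 * v 1 = 0 := by linear_combination h
      exact (mul_eq_zero.mp this).resolve_right h1
    ext i; fin_cases i
    · simp [h0, hu0]
    · simp [h1]
  · refine ⟨u 0 / v 0, ?_⟩
    ext i; fin_cases i
    · simp [h0]
    · simp; field_simp; linear_combination h

lemma dt_eq_zero_iff {u v : Fin 2 → F} (hu : u ≠ 0) (hv : v ≠ 0) :
    dt u v = 0 ↔ Projectivization.mk F u hu = Projectivization.mk F v hv := by
  refine ⟨mk_eq_of hu hv, fun h => ?_⟩
  rw [Projectivization.mk_eq_mk_iff'] at h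
  obtain ⟨a, rfl⟩ := h
  simp [dt]; ring

lemma ne_of_dt_left {u v : Fin 2 → F} (h : dt u v ≠ 0) : u ≠ 0 := by
  rintro rfl; simp [dt] at h

lemma ne_of_dt_right {u v : Fin 2 → F} (h : dt u v ≠ 0) : v ≠ 0 := by
  rintro rfl; simp [dt] at h

variable [Fintype F] [DecidableEq F]

def D (t : PP F × PP F × PP F) : ℤ :=
  quadraticChar F (dt t.1.rep t.2.1.rep * (dt t.2.1.rep t.2.2.rep * dt t.2.2.rep t.1.rep))

lemma D_mk {u v w : Fin 2 → F} (hu : u ≠ 0) (hv : v ≠ 0) (hw : w ≠ 0) :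
    D (Projectivization.mk F u hu, Projectivization.mk F v hv, Projectivization.mk F w hw)
      = quadraticChar F (dt u v * (dt v w * dt w u)) := by
  obtain ⟨a, ha⟩ := Projectivization.exists_smul_eq_mk_rep F u hu
  obtain ⟨b, hb⟩ := Projectivization.exists_smul_eq_mk_rep F v hv
  obtain ⟨c, hc⟩ := Projectivization.exists_smul_eq_mk_rep F w hw
  unfold D
  simp only [← ha, ← hb, ← hc]
  have : dt (a • u) (b • v) * (dt (b • v) (c • w) * dt (c • w) (a • u))
      = ((a:F) * b * c) ^ 2 * (dt u v * (dt v w * dt w u)) := by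
    simp [dt, Units.smul_def]; ring
  rw [this, map_mul, quadraticChar_sq_one', one_mul]
  simp

lemma D_ne {t : PP F × PP F × PP F} : D t ≠ 0 ↔ t.1 ≠ t.2.1 ∧ t.2.1 ≠ t.2.2 ∧ t.2.2 ≠ t.1 := by
  obtain ⟨P, Q, R⟩ := t
  induction P using Projectivization.ind with | h u hu => ?_
  induction Q using Projectivization.ind with | h v hv => ?_
  induction R using Projectivization.ind with | h w hw => ?_
  rw [D_mk, Ne, quadraticChar_eq_zero_iff, mul_eq_zero, mul_eq_zero,
    dt_eq_zero_iff hu hv, dt_eq_zero_iff hv hw, dt_eq_zero_iff hw hu]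
  tauto

lemma mapSL_mk (g : Matrix.SpecialLinearGroup (Fin 2) F) {u : Fin 2 → F} (hu : u ≠ 0) :
    ∃ h, mapSL g (Projectivization.mk F u hu) = Projectivization.mk F (g.1 *ᵥ u) h :=
  ⟨_, rfl⟩

lemma dt_mulVec (A : Matrix (Fin 2) (Fin 2) F) (u v : Fin 2 → F) :
    dt (A *ᵥ u) (A *ᵥ v) = A.det * dt u v := by
  simp [dt, Matrix.mulVec, dotProduct, Fin.sum_univ_two, Matrix.det_fin_two]; ring

def act (g : Matrix.SpecialLinearGroup (Fin 2) F) (t : PP F × PP F × PP F) :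
    PP F × PP F × PP F := (mapSL g t.1, mapSL g t.2.1, mapSL g t.2.2)

lemma D_act (g : Matrix.SpecialLinearGroup (Fin 2) F) (t : PP F × PP F × PP F) :
    D (act g t) = D t := by
  obtain ⟨P, Q, R⟩ := t
  induction P using Projectivization.ind with | h u hu => ?_
  induction Q using Projectivization.ind with | h v hv => ?_
  induction R using Projectivization.ind with | h w hw => ?_
  obtain ⟨h1, e1⟩ := mapSL_mk g hu
  obtain ⟨h2, e2⟩ := mapSL_mk g hv
  obtain ⟨h3, e3⟩ := mapSL_mk g hw
  simp only [act, e1, e2, e3, D_mk, dt_mulVec, g.2, one_mul]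

lemma mapSL_one (P : PP F) : mapSL 1 P = P := by
  induction P using Projectivization.ind with | h u hu => ?_
  obtain ⟨h1, e1⟩ := mapSL_mk 1 hu
  rw [e1]; simp

lemma mapSL_mul (g h : Matrix.SpecialLinearGroup (Fin 2) F) (P : PP F) :
    mapSL (g * h) P = mapSL g (mapSL h P) := by
  induction P using Projectivization.ind with | h u hu => ?_
  obtain ⟨h1, e1⟩ := mapSL_mk (g*h) hu
  obtain ⟨h2, e2⟩ := mapSL_mk h hu
  obtain ⟨h3, e3⟩ := mapSL_mk g h2
  rw [e1, e2, e3]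
  congr 1
  rw [Matrix.mulVec_mulVec]; rfl

lemma mapSL_inj (g : Matrix.SpecialLinearGroup (Fin 2) F) : Function.Injective (mapSL g) :=
  Projectivization.map_injective _ _

lemma canon {t : PP F × PP F × PP F} (ht : D t ≠ 0) :
    ∃ (u v : Fin 2 → F) (hu : u ≠ 0) (hv : v ≠ 0) (hw : u + v ≠ 0),
      t = (Projectivization.mk F u hu, Projectivization.mk F v hv, Projectivization.mk F (u+v) hw)
      ∧ dt u v ≠ 0 ∧ D t = quadraticChar F (dt u v) := by
  obtain ⟨P, Q, R⟩ := t
  induction P using Projectivization.ind with | h u hu => ?_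
  induction Q using Projectivization.ind with | h v hv => ?_
  induction R using Projectivization.ind with | h w hw => ?_
  have ht' := ht
  rw [D_mk, Ne, quadraticChar_eq_zero_iff, mul_eq_zero, mul_eq_zero] at ht'
  push Not at ht'
  obtain ⟨h1, h2, h3⟩ := ht'
  have hsum : (-dt v w) • u + (-dt w u) • v = dt u v • w := by
    ext i; fin_cases i <;> simp [dt] <;> ring
  have a1 : (-dt v w) • u ≠ 0 := smul_ne_zero (neg_ne_zero.2 h2) hu
  have a2 : (-dt w u) • v ≠ 0 := smul_ne_zero (neg_ne_zero.2 h3) hv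
  have a3 : (-dt v w) • u + (-dt w u) • v ≠ 0 := by rw [hsum]; exact smul_ne_zero h1 hw
  have e : (Projectivization.mk F u hu, Projectivization.mk F v hv, Projectivization.mk F w hw) =
    (Projectivization.mk F _ a1, Projectivization.mk F _ a2, Projectivization.mk F _ a3) := by
    refine Prod.ext ?_ (Prod.ext ?_ ?_) <;> apply mk_eq_of <;> simp [dt] <;> ring
  have d : dt ((-dt v w) • u) ((-dt w u) • v) = dt u v * (dt v w * dt w u) := by
    simp [dt]; ring
  refine ⟨_, _, a1, a2, a3, e, ?_, ?_⟩
  · rw [d]; exact mul_ne_zero h1 (mul_ne_zero h2 h3)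
  · rw [d, D_mk]

lemma trans {t t' : PP F × PP F × PP F} (ht : D t ≠ 0) (h : D t = D t') :
    ∃ g, act g t = t' := by
  obtain ⟨u, v, hu, hv, hw, rfl, hd, hD⟩ := canon ht
  obtain ⟨u', v', hu', hv', hw', rfl, hd', hD'⟩ := canon (h ▸ ht)
  rw [hD, hD'] at h
  have : IsSquare (dt u v / dt u' v') := by
    rw [← quadraticChar_one_iff_isSquare (div_ne_zero hd hd')]
    have e : dt u v = dt u v / dt u' v' * dt u' v' := by field_simp
    rw [e, map_mul] at h
    have h0 : quadraticChar F (dt u' v') ≠ 0 := by rwa [Ne, quadraticChar_eq_zero_iff]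
    exact mul_right_cancel₀ h0 (by rw [h, one_mul])
  obtain ⟨s, hs⟩ := this
  have hs0 : s ≠ 0 := by
    rintro rfl
    simp [hd, hd'] at hs
  have hs' : s * s * dt u' v' = dt u v := by rw [← hs]; field_simp
  let c := s / dt u v
  let A : Matrix (Fin 2) (Fin 2) F :=
    !![c * (u' 0 * v 1 - v' 0 * u 1), c * (v' 0 * u 0 - u' 0 * v 0);
       c * (u' 1 * v 1 - v' 1 * u 1), c * (v' 1 * u 0 - u' 1 * v 0)]
  have hA : A.det = 1 := by
    have : A.det = c * c * (dt u v * dt u' v') := by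
      simp [A, Matrix.det_fin_two, dt]; ring
    rw [this]
    have : c * c * (dt u v * dt u' v') = s * s * dt u' v' / dt u v := by
      simp only [c]; field_simp
    rw [this, hs', div_self hd]
  have hc : c * dt u v = s := by simp only [c]; field_simp
  have e1 : A *ᵥ u = s • u' := by
    rw [← hc]
    ext i; fin_cases i <;> simp [A, Matrix.mulVec, dotProduct, Fin.sum_univ_two, dt] <;> ring
  have e2 : A *ᵥ v = s • v' := by
    rw [← hc]
    ext i; fin_cases i <;> simp [A, Matrix.mulVec, dotProduct, Fin.sum_univ_two, dt] <;> ring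
  refine ⟨⟨A, hA⟩, ?_⟩
  obtain ⟨h1, f1⟩ := mapSL_mk ⟨A, hA⟩ hu
  obtain ⟨h2, f2⟩ := mapSL_mk ⟨A, hA⟩ hv
  obtain ⟨h3, f3⟩ := mapSL_mk ⟨A, hA⟩ hw
  simp only [act, f1, f2, f3]
  refine Prod.ext ?_ (Prod.ext ?_ ?_) <;> apply mk_eq_of <;>
    simp only [Matrix.mulVec_add, e1, e2] <;> simp [dt] <;> ring

noncomputable instance : Fintype (PP F) := Fintype.ofFinite _

lemma flip (hF : ringChar F ≠ 2) :
    ∃ φ : PP F × PP F × PP F ≃ PP F × PP F × PP F, ∀ t, D (φ t) = - D t := by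
  obtain ⟨a, ha⟩ := FiniteField.exists_nonsquare hF
  have ha0 : a ≠ 0 := by rintro rfl; exact ha (IsSquare.zero)
  let A : Matrix (Fin 2) (Fin 2) F := !![a, 0; 0, 1]
  have hA : A.det = a := by simp [A]
  have inj : Function.Injective (Matrix.toLin' A) := by
    rw [Matrix.toLin'_apply'] 
    apply Matrix.mulVec_injective_of_isUnit
    rw [Matrix.isUnit_iff_isUnit_det, hA]; exact ha0.isUnit
  let m : PP F → PP F := Projectivization.map (Matrix.toLin' A) inj
  have hm : Function.Bijective m :=
    Finite.injective_iff_bijective.1 (Projectivization.map_injective _ _)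
  let e := Equiv.ofBijective m hm
  refine ⟨e.prodCongr (e.prodCongr e), ?_⟩
  rintro ⟨P, Q, R⟩
  induction P using Projectivization.ind with | h u hu => ?_
  induction Q using Projectivization.ind with | h v hv => ?_
  induction R using Projectivization.ind with | h w hw => ?_
  have key : ∀ {u : Fin 2 → F} (hu : u ≠ 0),
    ∃ h, e (Projectivization.mk F u hu) = Projectivization.mk F (A *ᵥ u) h := fun hu => ⟨_, rfl⟩
  obtain ⟨h1, e1⟩ := key hu
  obtain ⟨h2, e2⟩ := key hv
  obtain ⟨h3, e3⟩ := key hw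
  simp only [Equiv.prodCongr_apply, Prod.map, e1, e2, e3, D_mk, dt_mulVec, hA]
  have : a * dt u v * (a * dt v w * (a * dt w u)) = a ^ 2 * (a * (dt u v * (dt v w * dt w u))) := by
    ring
  rw [this, map_mul, quadraticChar_sq_one' ha0, one_mul, map_mul,
    quadraticChar_neg_one_iff_not_isSquare.2 ha, neg_one_mul]

lemma sum_D (hF : ringChar F ≠ 2) : ∑ t : PP F × PP F × PP F, D t = 0 := by
  obtain ⟨φ, h⟩ := flip hF
  have := Equiv.sum_comp φ (D (F := F))
  simp only [h, Finset.sum_neg_distrib] at this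
  omega

def Nb (k : ℕ) (t : PP F × PP F × PP F) : ℕ :=
  {S ∈ designBlocks F k | t.1 ∈ S ∧ t.2.1 ∈ S ∧ t.2.2 ∈ S}.ncard

lemma blocks_image {k : ℕ} (g : Matrix.SpecialLinearGroup (Fin 2) F) {S : Set (PP F)}
    (hS : S ∈ designBlocks F k) : mapSL g '' S ∈ designBlocks F k := by
  obtain ⟨h, rfl⟩ := hS
  refine ⟨g * h, ?_⟩
  rw [Set.image_image]
  exact Set.image_congr' fun x => (mapSL_mul g h x).symm

lemma Nb_le (k : ℕ) (g : Matrix.SpecialLinearGroup (Fin 2) F) (t : PP F × PP F × PP F) :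
    Nb k t ≤ Nb k (act g t) := by
  unfold Nb
  rw [← Set.ncard_image_of_injective _ (Set.image_injective.2 (mapSL_inj g))]
  apply Set.ncard_le_ncard _ (Set.toFinite _)
  rintro _ ⟨S, ⟨hS, h1, h2, h3⟩, rfl⟩
  exact ⟨blocks_image g hS, Set.mem_image_of_mem _ h1, Set.mem_image_of_mem _ h2,
    Set.mem_image_of_mem _ h3⟩

lemma act_inv (g : Matrix.SpecialLinearGroup (Fin 2) F) (t : PP F × PP F × PP F) :
    act g⁻¹ (act g t) = t := by
  simp [act, ← mapSL_mul, mapSL_one]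

lemma act_inv' (g : Matrix.SpecialLinearGroup (Fin 2) F) (t : PP F × PP F × PP F) :
    act g (act g⁻¹ t) = t := by
  simp [act, ← mapSL_mul, mapSL_one]

lemma Nb_act (k : ℕ) (g : Matrix.SpecialLinearGroup (Fin 2) F) (t : PP F × PP F × PP F) :
    Nb k (act g t) = Nb k t := by
  refine le_antisymm ?_ (Nb_le k g t)
  have := Nb_le k g⁻¹ (act g t)
  rwa [act_inv] at this

lemma Nb_congr (k : ℕ) {t t' : PP F × PP F × PP F} (ht : D t ≠ 0) (h : D t = D t') :
    Nb k t = Nb k t' := by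
  obtain ⟨g, rfl⟩ := trans ht h
  rw [Nb_act]

def actE (g : Matrix.SpecialLinearGroup (Fin 2) F) :
    PP F × PP F × PP F ≃ PP F × PP F × PP F :=
  ⟨act g, act g⁻¹, act_inv g, act_inv' g⟩

open Classical in
def fS (S : Set (PP F)) : ℤ :=
  ∑ t : PP F × PP F × PP F, if t.1 ∈ S ∧ t.2.1 ∈ S ∧ t.2.2 ∈ S then D t else 0

lemma fS_image (g : Matrix.SpecialLinearGroup (Fin 2) F) (S : Set (PP F)) :
    fS (mapSL g '' S) = fS S := by
  classical
  unfold fS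
  rw [← Equiv.sum_comp (actE g)]
  apply Finset.sum_congr rfl
  intro t _
  have e : actE g t = act g t := rfl
  rw [e, D_act]
  simp only [act, (mapSL_inj g).mem_set_image]

open Classical in
lemma sum_DN (k : ℕ) :
    ∑ t : PP F × PP F × PP F, D t * (Nb k t : ℤ)
      = ((designBlocks F k).ncard : ℤ) * fS (starterB F k) := by
  have h1 : ∀ t : PP F × PP F × PP F, D t * (Nb k t : ℤ) =
      ∑ S ∈ (Set.toFinite (designBlocks F k)).toFinset,
        if t.1 ∈ S ∧ t.2.1 ∈ S ∧ t.2.2 ∈ S then D t else 0 := by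
    intro t
    rw [← Finset.sum_filter, Finset.sum_const, nsmul_eq_mul, mul_comm]
    congr 2
    unfold Nb
    rw [← Set.ncard_coe_finset]
    congr 1
    ext S
    simp
  simp only [h1]
  rw [Finset.sum_comm, Set.ncard_eq_toFinset_card _ (Set.toFinite (designBlocks F k)),
    ← nsmul_eq_mul, ← Finset.sum_const]
  apply Finset.sum_congr rfl
  intro S hS
  obtain ⟨g, rfl⟩ := (Set.Finite.mem_toFinset _).1 hS
  exact fS_image g _

lemma embed_inj : Function.Injective (embedPt F) := by
  intro x y h
  unfold embedPt at h
  rw [← dt_eq_zero_iff] at h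
  simp [dt] at h
  exact sub_eq_zero.1 h

lemma fS_starter (k : ℕ) : fS (starterB F k) =
    ∑ x ∈ Finset.univ.filter (fun x : F => x ^ k = 1),
        ∑ y ∈ Finset.univ.filter (fun y : F => y ^ k = 1),
          ∑ z ∈ Finset.univ.filter (fun z : F => z ^ k = 1),
            quadraticChar F ((x - y) * ((y - z) * (z - x))) := by
  classical
  set B := Finset.univ.filter (fun x : F => x ^ k = 1) with hB
  let E := B.map ⟨embedPt F, embed_inj⟩
  have hE : ∀ P, P ∈ starterB F k ↔ P ∈ E := by
    intro P
    simp [E, B, starterB]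
  unfold fS
  rw [← Finset.sum_filter]
  have : (Finset.univ.filter fun t : PP F × PP F × PP F =>
      t.1 ∈ starterB F k ∧ t.2.1 ∈ starterB F k ∧ t.2.2 ∈ starterB F k) = E ×ˢ (E ×ˢ E) := by
    ext t
    simp [hE]
  rw [this, Finset.sum_product]
  simp only [Finset.sum_product, E, Finset.sum_map]
  refine Finset.sum_congr rfl fun x _ => Finset.sum_congr rfl fun y _ =>
    Finset.sum_congr rfl fun z _ => ?_
  simp only [Function.Embedding.coeFn_mk, embedPt, D_mk]
  simp [dt]

lemma design_iff (k lam : ℕ) : isThreeDesign F k lam ↔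
    0 < lam ∧ ∀ t : PP F × PP F × PP F, D t ≠ 0 → Nb k t = lam := by
  classical
  unfold isThreeDesign
  refine and_congr_right fun _ => ⟨fun h t ht => ?_, fun h T hT => ?_⟩
  · obtain ⟨h1, h2, h3⟩ := D_ne.1 ht
    rw [← h {t.1, t.2.1, t.2.2} (Finset.card_eq_three.2 ⟨_, _, _, h1, h3.symm, h2, rfl⟩)]
    unfold Nb
    simp [Set.insert_subset_iff]
  · obtain ⟨P, Q, R, h1, h2, h3, rfl⟩ := Finset.card_eq_three.1 hT
    rw [← h (P, Q, R) (D_ne.2 ⟨h1, h3, h2.symm⟩)]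
    unfold Nb
    simp [Set.insert_subset_iff]

lemma exists_pos (q k : ℕ) (hq : Fintype.card F = q) (hkdvd : k ∣ q - 1) (hk3 : 3 < k)
    (hkq : k < q - 1) : ∃ t : PP F × PP F × PP F, D t ≠ 0 ∧ 0 < Nb k t := by
  have hk0 : k ≠ 0 := by omega
  obtain ⟨z, hz⟩ := IsCyclic.exists_generator (α := Fˣ)
  have ho : orderOf z = q - 1 := by
    rw [orderOf_eq_card_of_forall_mem_zpowers hz, Nat.card_eq_fintype_card, Fintype.card_units, hq]
  obtain ⟨e, he⟩ := hkdvd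
  have he0 : e ≠ 0 := by rintro rfl; omega
  have hw : orderOf (z ^ e) = k := by
    rw [orderOf_pow_of_dvd he0 (by rw [ho, he]; exact dvd_mul_left _ _), ho, he,
      Nat.mul_div_cancel _ (Nat.pos_of_ne_zero he0)]
  set w : Fˣ := z ^ e
  have hwk : (w : F) ^ k = 1 := by
    rw [← hw, ← Units.val_pow_eq_pow_val, pow_orderOf_eq_one, Units.val_one]
  have n1 : (w : F) ≠ 1 := by
    intro h
    have h : w = 1 := Units.ext h
    rw [h, orderOf_one] at hw; omega
  have n2 : (w : F) ^ 2 ≠ 1 := by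
    intro h
    have h : w ^ 2 = 1 := Units.ext (by simpa using h)
    have := Nat.le_of_dvd (by norm_num) (orderOf_dvd_of_pow_eq_one h)
    omega
  have n3 : (w : F) ^ 2 ≠ w := by
    intro h
    apply n1
    have : (w : F) * (w - 1) = 0 := by linear_combination h
    exact sub_eq_zero.1 ((mul_eq_zero.1 this).resolve_left w.ne_zero)
  refine ⟨(embedPt F 1, embedPt F w, embedPt F (w ^ 2)), D_ne.2 ⟨?_, ?_, ?_⟩, ?_⟩
  · exact fun h => n1 (embed_inj h).symm
  · exact fun h => n3 (embed_inj h).symm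
  · exact fun h => n2 (embed_inj h)
  · unfold Nb
    rw [Set.ncard_pos]
    refine ⟨starterB F k, ⟨1, ?_⟩, ⟨1, by simp, rfl⟩, ⟨w, hwk, rfl⟩, ⟨(w:F)^2, ?_, rfl⟩⟩
    · simp [Set.image_congr' mapSL_one]
    · show ((w : F) ^ 2) ^ k = 1
      rw [← pow_mul, mul_comm, pow_mul, hwk, one_pow]

lemma D_vals (t : PP F × PP F × PP F) (h : D t ≠ 0) : D t = 1 ∨ D t = -1 := by
  unfold D at *
  apply quadraticChar_dichotomy
  rwa [Ne, quadraticChar_eq_zero_iff] at h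

lemma main (q k : ℕ) (hq : Fintype.card F = q) (hqodd : Odd q)
    (hkdvd : k ∣ q - 1) (hk3 : 3 < k) (hkq : k < q - 1) :
    gives3Design F k ↔ fS (starterB F k) = 0 := by
  have hF : ringChar F ≠ 2 := by
    intro h
    have := FiniteField.even_card_of_char_two h
    rw [hq] at this
    have := Nat.odd_iff.1 hqodd
    omega
  have hs := sum_DN (F := F) k
  obtain ⟨t0, ht0, hN0⟩ := exists_pos (F := F) q k hq hkdvd hk3 hkq
  have hb : ((designBlocks F k).ncard : ℤ) ≠ 0 := by
    have : 0 < (designBlocks F k).ncard := by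
      rw [Set.ncard_pos]
      exact ⟨_, 1, rfl⟩
    exact_mod_cast this.ne'
  constructor
  · rintro ⟨lam, h⟩
    rw [design_iff] at h
    have : ∑ t : PP F × PP F × PP F, D t * (Nb k t : ℤ) = ∑ t : PP F × PP F × PP F, D t * lam := by
      refine Finset.sum_congr rfl fun t _ => ?_
      by_cases h0 : D t = 0
      · simp [h0]
      · rw [h.2 t h0]
    rw [this, ← Finset.sum_mul, sum_D hF, zero_mul] at hs
    exact (mul_eq_zero.1 hs.symm).resolve_left hb
  · intro h
    rw [h, mul_zero] at hs
    obtain ⟨φ, hφ⟩ := flip (F := F) hF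
    refine ⟨Nb k t0, (design_iff _ _).2 ⟨hN0, ?_⟩⟩
    -- t0 and φ t0 represent the two classes
    have hφ0 : D (φ t0) ≠ 0 := by rw [hφ]; exact neg_ne_zero.2 ht0
    have cls : ∀ t : PP F × PP F × PP F, D t ≠ 0 → D t = D t0 ∨ D t = D (φ t0) := by
      intro t ht
      rw [hφ]
      rcases D_vals t ht with h | h <;> rcases D_vals t0 ht0 with h' | h' <;> simp [h, h']
    have key : ∑ t : PP F × PP F × PP F, D t0 * D t * ((Nb k t : ℤ)) * 2 =
        ∑ t : PP F × PP F × PP F, (D t ^ 2 * ((Nb k t0 : ℤ) - Nb k (φ t0))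
          + D t0 * D t * ((Nb k t0 : ℤ) + Nb k (φ t0))) := by
      refine Finset.sum_congr rfl fun t _ => ?_
      by_cases ht : D t = 0
      · simp [ht]
      · rcases cls t ht with h | h
        · rw [Nb_congr k ht h, h]; ring
        · rw [Nb_congr k ht h, h, hφ]; ring
    rw [Finset.sum_add_distrib, ← Finset.sum_mul, ← Finset.sum_mul, ← Finset.sum_mul,
      ← Finset.mul_sum, sum_D hF] at key
    simp only [mul_assoc] at key
    rw [← Finset.mul_sum, hs] at key
    have pos : 0 < ∑ t : PP F × PP F × PP F, D t ^ 2 :=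
      Finset.sum_pos' (fun t _ => sq_nonneg _) ⟨t0, Finset.mem_univ _, by positivity⟩
    have eq : (Nb k t0 : ℤ) - Nb k (φ t0) = 0 := by
      have : (∑ t : PP F × PP F × PP F, D t ^ 2) * ((Nb k t0 : ℤ) - Nb k (φ t0)) = 0 := by
        linarith
      exact (mul_eq_zero.1 this).resolve_left pos.ne'
    intro t ht
    rcases cls t ht with h | h
    · exact Nb_congr k ht h
    · rw [Nb_congr k ht h]; omega

end S4

/-- Lemma 2.6: for even `e = (q-1)/k`, `(q,k)` gives a 3-design iff the sum of
`Δ({x,y,z}) = χ((x-y)(y-z)(z-x))` over all 3-subsets `{x,y,z}` of `B` vanishes.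
(Here the sum is taken over ordered triples of elements of `B`; triples with a
repeated entry contribute `χ(0) = 0`, and each 3-subset is counted six times
with the same value since `χ(-1) = 1`, so this sum is six times the sum over
3-subsets and vanishes iff the latter does.) -/
theorem stmt_4 (F : Type) [Field F] [Fintype F] [DecidableEq F]
    (q k : ℕ) (hq : Fintype.card F = q) (hqodd : Odd q) (hq4 : q % 4 = 1)
    (hkdvd : k ∣ q - 1) (hk3 : 3 < k) (hkq : k < q - 1)
    (he : Even ((q - 1) / k)) :
    gives3Design F k ↔
      (∑ x ∈ Finset.univ.filter (fun x : F => x ^ k = 1),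
        ∑ y ∈ Finset.univ.filter (fun y : F => y ^ k = 1),
          ∑ z ∈ Finset.univ.filter (fun z : F => z ^ k = 1),
            quadraticChar F ((x - y) * ((y - z) * (z - x)))) = 0 := by
  rw [S4.main q k hq hqodd hkdvd hk3 hkq, S4.fS_starter]
end
end
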